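/- Every finite-volume non-compact right-angled convex hyperbolic 5-polyhedron P has at least two ideal vertices: v_∞(P) ≥ 2. -/

import Mathlib

open scoped BigOperators

noncomputable section

/-- The Minkowski bilinear form `⟨x,y⟩ = -x₀y₀ + x₁y₁ + ⋯ + xₙyₙ` on `ℝ^{n+1}`. -/
def mink {n : ℕ} (x y : Fin (n + 1) → ℝ) : ℝ :=
  -(x 0 * y 0) + ∑ i : Fin n, x i.succ * y i.succ

/-- The hyperboloid model of the hyperbolic space `ℍⁿ`. -/
def Hyperboloid (n : ℕ) : Set (Fin (n + 1) → ℝ) :=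
  {x | mink x x = -1 ∧ 0 < x 0}

/-- The Klein projection `x ↦ (x₁/x₀, …, xₙ/x₀)` of the hyperboloid onto the unit ball. -/
def kleinMap {n : ℕ} (x : Fin (n + 1) → ℝ) : EuclideanSpace ℝ (Fin n) :=
  WithLp.toLp 2 fun i => x i.succ / x 0

/-- Dimension of a subset of a real vector space: the rank of its vector span. -/
def sdim {n : ℕ} (s : Set (EuclideanSpace ℝ (Fin n))) : ℕ :=
  Module.finrank ℝ (vectorSpan ℝ s)

/-- A convex hyperbolic `n`-polyhedron: a finite intersection of hyperbolic half-spaces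
`H_{eᵢ}⁻ = {x : ⟨eᵢ,x⟩ ≤ 0}` (with `⟨eᵢ,eᵢ⟩ = 1`) having nonempty interior
(equivalently, its Klein-model image has nonempty interior in `ℝⁿ`). -/
structure HypPolyhedron (n : ℕ) where
  m : ℕ
  e : Fin m → (Fin (n + 1) → ℝ)
  unit : ∀ i, mink (e i) (e i) = 1
  nonempty_int :
    (interior (kleinMap '' {x ∈ Hyperboloid n | ∀ i, mink (e i) x ≤ 0})).Nonempty

namespace HypPolyhedron

variable {n : ℕ} (P : HypPolyhedron n)

/-- The set of points of the polyhedron in the hyperboloid model. -/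
def carrier : Set (Fin (n + 1) → ℝ) :=
  {x ∈ Hyperboloid n | ∀ i, mink (P.e i) x ≤ 0}

/-- `P̄`: the closure of the Klein-model image of the polyhedron in the closed unit ball. -/
def cl : Set (EuclideanSpace ℝ (Fin n)) :=
  closure (kleinMap '' P.carrier)

/-- The `k`-faces of `P`: the `k`-dimensional (nonempty) exposed faces of `P̄`. -/
def faces (k : ℕ) : Set (Set (EuclideanSpace ℝ (Fin n))) :=
  {F | IsExposed ℝ P.cl F ∧ F.Nonempty ∧ sdim F = k}

/-- `a_k(P)`: the number of `k`-faces of `P`. -/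
def a (k : ℕ) : ℕ := (P.faces k).ncard

/-- Vertices of `P`: the points of `0`-dimensional exposed faces of `P̄`. -/
def verts : Set (EuclideanSpace ℝ (Fin n)) :=
  {v | IsExposed ℝ P.cl {v}}

/-- Ideal vertices: vertices lying on the unit sphere. -/
def idealVerts : Set (EuclideanSpace ℝ (Fin n)) :=
  {v ∈ P.verts | ‖v‖ = 1}

/-- Finite vertices: vertices lying in the open unit ball. -/
def finiteVerts : Set (EuclideanSpace ℝ (Fin n)) :=
  {v ∈ P.verts | ‖v‖ < 1}

/-- `v_∞(P)`: the number of ideal vertices of `P`. -/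
def vInf : ℕ := P.idealVerts.ncard

/-- The bounding hyperplane `H_e` contains the face `F`. -/
def faceInHyperplane (e : Fin (n + 1) → ℝ) (F : Set (EuclideanSpace ℝ (Fin n))) : Prop :=
  ∀ x ∈ P.carrier, kleinMap x ∈ F → mink e x = 0

/-- `P` is right-angled: whenever two distinct bounding hyperplanes both contain an
`(n-2)`-dimensional face of `P`, the corresponding unit normals are orthogonal,
i.e. the dihedral angle is `π/2`. -/
def IsRightAngled : Prop :=
  ∀ i j : Fin P.m, i ≠ j →
    (∃ F ∈ P.faces (n - 2), P.faceInHyperplane (P.e i) F ∧ P.faceInHyperplane (P.e j) F) →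
    mink (P.e i) (P.e j) = 0

/-- `P` has finite volume: `P̄` is the convex hull of its (finitely many) vertices. -/
def FiniteVolume : Prop :=
  P.verts.Finite ∧ P.cl = convexHull ℝ P.verts

/-- `P` is compact: finite volume and all vertices are finite. -/
def IsCompactPoly : Prop :=
  P.FiniteVolume ∧ ∀ v ∈ P.verts, ‖v‖ < 1

/-- `P` is ideal: finite volume and all vertices are ideal. -/
def IsIdeal : Prop :=
  P.FiniteVolume ∧ ∀ v ∈ P.verts, ‖v‖ = 1

end HypPolyhedron

/-- `ν(P) = a_{n-1}(P) + v_∞(P)` ranging over the family `𝒫ⁿ` of finite-volume non-compact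
right-angled convex hyperbolic `n`-polyhedra. -/
def nuSet (n : ℕ) : Set ℕ :=
  {m | ∃ P : HypPolyhedron n,
        P.FiniteVolume ∧ P.IsRightAngled ∧ ¬ P.IsCompactPoly ∧ P.a (n - 1) + P.vInf = m}

/-- `νₙ = sInf {ν(P) : P ∈ 𝒫ⁿ}` (with `sInf ∅ = 0`). -/
def nu (n : ℕ) : ℕ := sInf (nuSet n)

open Topology

/-! ### The Minkowski form -/

lemma mink_comm {n : ℕ} (x y : Fin (n + 1) → ℝ) : mink x y = mink y x := by
  simp only [mink, mul_comm]

lemma mink_add_left {n : ℕ} (x y z : Fin (n + 1) → ℝ) :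
    mink (x + y) z = mink x z + mink y z := by
  simp only [mink, Pi.add_apply, add_mul, Finset.sum_add_distrib]; ring

lemma mink_smul_left {n : ℕ} (c : ℝ) (x z : Fin (n + 1) → ℝ) :
    mink (c • x) z = c * mink x z := by
  simp only [mink, Pi.smul_apply, smul_eq_mul, mul_add, Finset.mul_sum, mul_assoc, mul_neg]

lemma mink_add_right {n : ℕ} (x y z : Fin (n + 1) → ℝ) :
    mink x (y + z) = mink x y + mink x z := by
  rw [mink_comm, mink_add_left, mink_comm y, mink_comm z]

lemma mink_smul_right {n : ℕ} (c : ℝ) (x z : Fin (n + 1) → ℝ) :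
    mink x (c • z) = c * mink x z := by
  rw [mink_comm, mink_smul_left, mink_comm]

/-- The Minkowski form as a bilinear form. -/
def minkForm (n : ℕ) : LinearMap.BilinForm ℝ (Fin (n + 1) → ℝ) :=
  LinearMap.mk₂ ℝ mink mink_add_left mink_smul_left mink_add_right mink_smul_right

lemma minkForm_apply {n : ℕ} (x y : Fin (n + 1) → ℝ) : minkForm n x y = mink x y := rfl

lemma mink_neg_left {n : ℕ} (x y : Fin (n + 1) → ℝ) : mink (-x) y = -mink x y := by
  simp only [← minkForm_apply, map_neg, LinearMap.neg_apply]

lemma mink_neg_right {n : ℕ} (x y : Fin (n + 1) → ℝ) : mink x (-y) = -mink x y := by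
  simp only [← minkForm_apply, map_neg]

lemma mink_sub_left {n : ℕ} (x y z : Fin (n + 1) → ℝ) :
    mink (x - y) z = mink x z - mink y z := by
  simp only [← minkForm_apply, map_sub, LinearMap.sub_apply]

lemma mink_sub_right {n : ℕ} (x y z : Fin (n + 1) → ℝ) :
    mink x (y - z) = mink x y - mink x z := by
  simp only [← minkForm_apply, map_sub]

lemma mink_zero_right {n : ℕ} (x : Fin (n + 1) → ℝ) : mink x 0 = 0 := by
  simp only [← minkForm_apply, map_zero]

lemma mink_sum_left {n : ℕ} {ι : Type*} (s : Finset ι) (f : ι → Fin (n + 1) → ℝ)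
    (y : Fin (n + 1) → ℝ) : mink (∑ i ∈ s, f i) y = ∑ i ∈ s, mink (f i) y := by
  simp only [← minkForm_apply, map_sum, LinearMap.sum_apply]

lemma mink_sum_right {n : ℕ} {ι : Type*} (s : Finset ι) (f : ι → Fin (n + 1) → ℝ)
    (y : Fin (n + 1) → ℝ) : mink y (∑ i ∈ s, f i) = ∑ i ∈ s, mink y (f i) := by
  simp only [← minkForm_apply, map_sum]

lemma continuous_mink {n : ℕ} {X : Type*} [TopologicalSpace X] {f g : X → Fin (n + 1) → ℝ}
    (hf : Continuous f) (hg : Continuous g) : Continuous fun x => mink (f x) (g x) := by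
  unfold mink; fun_prop

/-- The open cone of future-directed timelike vectors. -/
def futureCone (n : ℕ) : Set (Fin (n + 1) → ℝ) := {x | mink x x < 0 ∧ 0 < x 0}

lemma isOpen_futureCone (n : ℕ) : IsOpen (futureCone n) :=
  (isOpen_lt (continuous_mink continuous_id continuous_id) continuous_const).inter
    (isOpen_lt continuous_const (continuous_apply 0))

/-- Reverse Cauchy–Schwarz inequality, in qualitative form. -/
lemma mink_neg_of_mem_futureCone {n : ℕ} {x y : Fin (n + 1) → ℝ} (hx : x ∈ futureCone n)
    (hy : mink y y ≤ 0) (hy0 : 0 < y 0) : mink x y < 0 := by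
  obtain ⟨hxx, hx0⟩ := hx
  simp only [mink] at *
  have hcs := Finset.sum_mul_sq_le_sq_mul_sq Finset.univ (fun i : Fin n => x i.succ)
    (fun i : Fin n => y i.succ)
  simp only [pow_two] at hcs
  set a := ∑ i : Fin n, x i.succ * x i.succ
  set b := ∑ i : Fin n, y i.succ * y i.succ
  set c := ∑ i : Fin n, x i.succ * y i.succ
  have ha : 0 ≤ a := Finset.sum_nonneg fun i _ => mul_self_nonneg _
  have h1 : c * c < (x 0 * y 0) * (x 0 * y 0) := by
    have h2 : a * b ≤ a * (y 0 * y 0) := mul_le_mul_of_nonneg_left (by linarith) ha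
    have h3 : a * (y 0 * y 0) < (x 0 * x 0) * (y 0 * y 0) :=
      mul_lt_mul_of_pos_right (by linarith) (by positivity)
    nlinarith
  have h4 : c < x 0 * y 0 := by
    have := abs_lt_of_sq_lt_sq (by simpa only [pow_two] using h1) (by positivity)
    exact (abs_lt.1 (by simpa using this)).2
  linarith

lemma mem_futureCone_of_mink_neg {n : ℕ} {x y : Fin (n + 1) → ℝ} (hx : x ∈ futureCone n)
    (hy : mink y y < 0) (hxy : mink x y < 0) : y ∈ futureCone n := by
  refine ⟨hy, ?_⟩
  rcases lt_trichotomy (y 0) 0 with h | h | h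
  · have := mink_neg_of_mem_futureCone (y := -y) hx
      (by rw [mink_neg_left, mink_neg_right]; linarith) (by simpa using h)
    rw [mink_neg_right] at this
    linarith
  · have : 0 ≤ mink y y := by
      simp only [mink, h, mul_zero, neg_zero, zero_add]
      exact Finset.sum_nonneg fun i _ => mul_self_nonneg _
    linarith
  · exact h

lemma mink_self_pos_of_orthogonal {n : ℕ} {x y : Fin (n + 1) → ℝ} (hx : x ∈ futureCone n)
    (hxy : mink x y = 0) (hy : y ≠ 0) : 0 < mink y y := by
  by_contra! hle
  rcases lt_trichotomy (y 0) 0 with h | h | h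
  · have := mink_neg_of_mem_futureCone (y := -y) hx
      (by rw [mink_neg_left, mink_neg_right]; linarith) (by simpa using h)
    rw [mink_neg_right] at this
    linarith
  · have hs : ∑ i : Fin n, y i.succ * y i.succ = 0 := by
      refine le_antisymm ?_ (Finset.sum_nonneg fun i _ => mul_self_nonneg _)
      simpa [mink, h] using hle
    rw [Finset.sum_eq_zero_iff_of_nonneg fun i _ => mul_self_nonneg _] at hs
    refine hy (funext fun i => ?_)
    induction i using Fin.cases with
    | zero => exact h
    | succ i => simpa using hs i (Finset.mem_univ _)
  · exact (mink_neg_of_mem_futureCone hx hle h).ne hxy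

lemma add_mem_futureCone {n : ℕ} {x y : Fin (n + 1) → ℝ} (hx : x ∈ futureCone n)
    (hy : y ∈ futureCone n) : x + y ∈ futureCone n := by
  refine ⟨?_, add_pos hx.2 hy.2⟩
  have := mink_neg_of_mem_futureCone hx hy.1.le hy.2
  have h1 := hx.1
  have h2 := hy.1
  rw [mink_add_left, mink_add_right, mink_add_right, mink_comm y x]
  linarith

lemma smul_mem_futureCone {n : ℕ} {x : Fin (n + 1) → ℝ} {c : ℝ} (hc : 0 < c)
    (hx : x ∈ futureCone n) : c • x ∈ futureCone n := by
  refine ⟨?_, by simpa using mul_pos hc hx.2⟩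
  rw [mink_smul_left, mink_smul_right]
  exact mul_neg_of_pos_of_neg hc (mul_neg_of_pos_of_neg hc hx.1)

lemma eventually_mem_futureCone {n : ℕ} {z : Fin (n + 1) → ℝ} (hz : z ∈ futureCone n)
    (u : Fin (n + 1) → ℝ) : ∀ᶠ ε in 𝓝 (0 : ℝ), z + ε • u ∈ futureCone n := by
  have : ContinuousAt (fun ε : ℝ => z + ε • u) 0 := by fun_prop
  exact this.eventually_mem ((isOpen_futureCone n).mem_nhds (by simpa using hz))

lemma eventually_mink_neg {n : ℕ} {e z : Fin (n + 1) → ℝ} (hz : mink e z < 0)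
    (u : Fin (n + 1) → ℝ) : ∀ᶠ ε in 𝓝 (0 : ℝ), mink e (z + ε • u) < 0 := by
  have : Continuous (fun ε : ℝ => mink e (z + ε • u)) :=
    continuous_mink continuous_const (by fun_prop)
  exact this.continuousAt.eventually_lt continuousAt_const (by simpa using hz)

/-! ### The Klein model -/

/-- The representative of a point of the Klein model with time coordinate `1`. -/
def kleinLift {n : ℕ} (p : EuclideanSpace ℝ (Fin n)) : Fin (n + 1) → ℝ :=
  Fin.cons 1 p.ofLp

/-- A spatial vector, seen in Minkowski space. -/
def spatial {n : ℕ} (u : EuclideanSpace ℝ (Fin n)) : Fin (n + 1) → ℝ :=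
  Fin.cons 0 u.ofLp

/-- The spatial part of a vector of Minkowski space. -/
def spatialPart {n : ℕ} (x : Fin (n + 1) → ℝ) : EuclideanSpace ℝ (Fin n) :=
  WithLp.toLp 2 fun i => x i.succ

lemma kleinLift_add {n : ℕ} (p : EuclideanSpace ℝ (Fin n)) (c : ℝ)
    (u : EuclideanSpace ℝ (Fin n)) : kleinLift (p + c • u) = kleinLift p + c • spatial u := by
  funext i
  induction i using Fin.cases <;> simp [kleinLift, spatial]

lemma mink_spatial {n : ℕ} (x : Fin (n + 1) → ℝ) (u : EuclideanSpace ℝ (Fin n)) :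
    mink x (spatial u) = inner ℝ (spatialPart x) u := by
  simp [mink, spatial, spatialPart, PiLp.inner_apply, mul_comm]

lemma mink_kleinLift {n : ℕ} (x : Fin (n + 1) → ℝ) (p : EuclideanSpace ℝ (Fin n)) :
    mink x (kleinLift p) = -x 0 + inner ℝ (spatialPart x) p := by
  simp [mink, kleinLift, spatialPart, PiLp.inner_apply, mul_comm]

lemma mink_kleinLift_self {n : ℕ} (p : EuclideanSpace ℝ (Fin n)) :
    mink (kleinLift p) (kleinLift p) = ‖p‖ ^ 2 - 1 := by
  rw [EuclideanSpace.norm_sq_eq]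
  simp [mink, kleinLift, pow_two]
  ring

lemma kleinLift_zero {n : ℕ} (p : EuclideanSpace ℝ (Fin n)) : kleinLift p 0 = 1 := rfl

lemma kleinLift_mem_futureCone {n : ℕ} {p : EuclideanSpace ℝ (Fin n)} (hp : ‖p‖ < 1) :
    kleinLift p ∈ futureCone n := by
  refine ⟨?_, by simp [kleinLift_zero]⟩
  rw [mink_kleinLift_self]
  nlinarith [norm_nonneg p]

lemma norm_lt_one_of_kleinLift_mem {n : ℕ} {p : EuclideanSpace ℝ (Fin n)}
    (hp : kleinLift p ∈ futureCone n) : ‖p‖ < 1 := by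
  have := hp.1
  rw [mink_kleinLift_self] at this
  nlinarith [norm_nonneg p]

lemma kleinMap_kleinLift {n : ℕ} (p : EuclideanSpace ℝ (Fin n)) : kleinMap (kleinLift p) = p := by
  ext i
  simp [kleinMap, kleinLift]

lemma kleinMap_smul {n : ℕ} {c : ℝ} (hc : c ≠ 0) (x : Fin (n + 1) → ℝ) :
    kleinMap (c • x) = kleinMap x := by
  ext i
  simp [kleinMap, mul_div_mul_left _ _ hc]

lemma kleinLift_injective {n : ℕ} :
    Function.Injective (kleinLift : EuclideanSpace ℝ (Fin n) → _) :=
  Function.LeftInverse.injective kleinMap_kleinLift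

lemma smul_kleinLift_kleinMap {n : ℕ} {x : Fin (n + 1) → ℝ} (hx : x 0 ≠ 0) :
    x 0 • kleinLift (kleinMap x) = x := by
  funext i
  induction i using Fin.cases
  · simp [kleinLift]
  · simp [kleinLift, kleinMap, mul_div_cancel₀ _ hx]

lemma kleinLift_kleinMap {n : ℕ} {x : Fin (n + 1) → ℝ} (hx : x 0 ≠ 0) :
    kleinLift (kleinMap x) = (x 0)⁻¹ • x := by
  rw [eq_inv_smul_iff₀ hx, smul_kleinLift_kleinMap hx]

namespace HypPolyhedron

variable {n : ℕ} (P : HypPolyhedron n)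

lemma mem_image_carrier {p : EuclideanSpace ℝ (Fin n)} :
    p ∈ kleinMap '' P.carrier ↔
      kleinLift p ∈ futureCone n ∧ ∀ i, mink (P.e i) (kleinLift p) ≤ 0 := by
  constructor
  · rintro ⟨x, ⟨⟨hx, hx0⟩, hxe⟩, rfl⟩
    rw [kleinLift_kleinMap hx0.ne']
    refine ⟨smul_mem_futureCone (inv_pos.2 hx0) ⟨by linarith, hx0⟩, fun i => ?_⟩
    rw [mink_smul_right]
    exact mul_nonpos_of_nonneg_of_nonpos (inv_pos.2 hx0).le (hxe i)
  · rintro ⟨hp, hpe⟩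
    set s := -mink (kleinLift p) (kleinLift p)
    have hs : 0 < s := by have := hp.1; simp only [s]; linarith
    have hq : 0 < Real.sqrt s := Real.sqrt_pos.2 hs
    refine ⟨(Real.sqrt s)⁻¹ • kleinLift p, ⟨⟨?_, ?_⟩, fun i => ?_⟩, ?_⟩
    · rw [mink_smul_left, mink_smul_right, ← mul_assoc, ← mul_inv, Real.mul_self_sqrt hs.le]
      have : mink (kleinLift p) (kleinLift p) = -s := by simp [s]
      rw [this]
      field_simp
    · simpa [kleinLift_zero] using hq
    · rw [mink_smul_right]
      exact mul_nonpos_of_nonneg_of_nonpos (inv_pos.2 hq).le (hpe i)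
    · rw [kleinMap_smul (inv_pos.2 hq).ne', kleinMap_kleinLift]

lemma mem_cl_of_mem {p : EuclideanSpace ℝ (Fin n)} (hp : kleinLift p ∈ futureCone n)
    (hpe : ∀ i, mink (P.e i) (kleinLift p) ≤ 0) : p ∈ P.cl :=
  subset_closure (P.mem_image_carrier.2 ⟨hp, hpe⟩)

lemma norm_le_and_mink_nonpos_of_mem_cl {p : EuclideanSpace ℝ (Fin n)} (hp : p ∈ P.cl) :
    ‖p‖ ≤ 1 ∧ ∀ i, mink (P.e i) (kleinLift p) ≤ 0 := by
  have hcl : IsClosed {p : EuclideanSpace ℝ (Fin n) |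
      ‖p‖ ≤ 1 ∧ ∀ i, mink (P.e i) (kleinLift p) ≤ 0} := by
    simp only [mink_kleinLift, Set.ofPred_and, Set.ofPred_forall]
    exact (isClosed_le continuous_norm continuous_const).inter
      (isClosed_iInter fun i => isClosed_le (by fun_prop) continuous_const)
  refine closure_minimal (fun q hq => ?_) hcl hp
  obtain ⟨h1, h2⟩ := P.mem_image_carrier.1 hq
  exact ⟨(norm_lt_one_of_kleinLift_mem h1).le, h2⟩

lemma spatialPart_e_ne_zero (i : Fin P.m) : spatialPart (P.e i) ≠ 0 := by
  intro h
  have h1 := P.unit i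
  have h2 : ∀ j : Fin n, P.e i j.succ = 0 := fun j => by
    simpa [spatialPart] using congrArg (fun v : EuclideanSpace ℝ (Fin n) => v j) h
  simp only [mink, h2, mul_zero, Finset.sum_const_zero, add_zero] at h1
  nlinarith [mul_self_nonneg (P.e i 0)]

lemma exists_interior_point :
    ∃ p ∈ futureCone n, ∀ i, mink (P.e i) p < 0 := by
  obtain ⟨p, hp⟩ := P.nonempty_int
  have hmem : ∀ q ∈ interior (kleinMap '' P.carrier), kleinLift q ∈ futureCone n ∧
      ∀ i, mink (P.e i) (kleinLift q) ≤ 0 := fun q hq =>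
    P.mem_image_carrier.1 (interior_subset hq)
  refine ⟨kleinLift p, (hmem p hp).1, fun i => ?_⟩
  have hc : ContinuousAt (fun ε : ℝ => p + ε • spatialPart (P.e i)) 0 := by fun_prop
  have hev := (hc.eventually_mem (isOpen_interior.mem_nhds (by simpa using hp))).filter_mono
    (nhdsWithin_le_nhds (s := Set.Ioi 0))
  obtain ⟨ε, hε, hε0⟩ := (hev.and self_mem_nhdsWithin).exists
  have h1 := (hmem _ hε).2 i
  rw [kleinLift_add, mink_add_right, mink_smul_right, mink_spatial,
    real_inner_self_eq_norm_sq] at h1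
  have h2 : 0 < ‖spatialPart (P.e i)‖ := norm_pos_iff.2 (P.spatialPart_e_ne_zero i)
  have h3 : 0 < ε * ‖spatialPart (P.e i)‖ ^ 2 := mul_pos hε0 (by positivity)
  linarith

end HypPolyhedron

/-! ### Facets and orthogonality -/

/-- A finite system of inequalities contains an irredundant equivalent subsystem. -/
lemma exists_irredundant_subsystem {X ι : Type*} [DecidableEq ι] (S : Set X) (f : ι → X → ℝ)
    (I : Finset ι) :
    ∃ J ⊆ I, (∀ x ∈ S, (∀ j ∈ J, f j x ≤ 0) → ∀ i ∈ I, f i x ≤ 0) ∧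
      ∀ j ∈ J, ∃ x ∈ S, (∀ k ∈ J, k ≠ j → f k x ≤ 0) ∧ 0 < f j x := by
  induction I using Finset.strongInduction with
  | H I ih =>
    by_cases h : ∀ j ∈ I, ∃ x ∈ S, (∀ k ∈ I, k ≠ j → f k x ≤ 0) ∧ 0 < f j x
    · exact ⟨I, subset_rfl, fun x _ hx => hx, h⟩
    · push Not at h
      obtain ⟨j, hj, hred⟩ := h
      obtain ⟨J, hJ, hdef, hirr⟩ := ih (I.erase j) (Finset.erase_ssubset hj)
      refine ⟨J, hJ.trans (Finset.erase_subset _ _), fun x hx hxJ i hi => ?_, hirr⟩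
      have hx' := hdef x hx hxJ
      by_cases hij : i = j
      · subst hij
        exact hred x hx fun k hk hki => hx' k (Finset.mem_erase.2 ⟨hki, hk⟩)
      · exact hx' i (Finset.mem_erase.2 ⟨hij, hi⟩)

/-- An interior point and a point violating only the `j`-th inequality give a point in the
relative interior of the `j`-th facet. -/
lemma exists_facet_point {n : ℕ} {ι : Type*} {e : ι → Fin (n + 1) → ℝ} {J : Finset ι}
    {p x : Fin (n + 1) → ℝ} {j : ι} (hp : p ∈ futureCone n) (hx : x ∈ futureCone n)
    (hpJ : ∀ k ∈ J, mink (e k) p < 0) (hj : j ∈ J)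
    (hxJ : ∀ k ∈ J, k ≠ j → mink (e k) x ≤ 0) (hxj : 0 < mink (e j) x) :
    ∃ z ∈ futureCone n, mink (e j) z = 0 ∧ (∀ k ∈ J, k ≠ j → mink (e k) z < 0) ∧
      ∀ y, mink y p = 0 → mink y x = 0 → mink y z = 0 := by
  have hpj := hpJ j hj
  refine ⟨mink (e j) x • p + (-mink (e j) p) • x,
    add_mem_futureCone (smul_mem_futureCone hxj hp) (smul_mem_futureCone (neg_pos.2 hpj) hx),
    ?_, fun k hk hkj => ?_, fun y hyp hyx => ?_⟩
  · rw [mink_add_right, mink_smul_right, mink_smul_right]; ring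
  · rw [mink_add_right, mink_smul_right, mink_smul_right]
    have h1 := mul_neg_of_pos_of_neg hxj (hpJ k hk)
    have h2 := mul_nonpos_of_nonneg_of_nonpos (neg_pos.2 hpj).le (hxJ k hk hkj)
    linarith
  · rw [mink_add_right, mink_smul_right, mink_smul_right, hyp, hyx]; ring

lemma exists_pos_small {n : ℕ} {ι : Type*} {e : ι → Fin (n + 1) → ℝ} {z : Fin (n + 1) → ℝ}
    (hz : z ∈ futureCone n) (u : Fin (n + 1) → ℝ) (J : Finset ι)
    (hJ : ∀ k ∈ J, mink (e k) z < 0) :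
    ∃ ε : ℝ, 0 < ε ∧ z + ε • u ∈ futureCone n ∧ ∀ k ∈ J, mink (e k) (z + ε • u) < 0 := by
  have h1 : ∀ᶠ ε in 𝓝 (0 : ℝ), ∀ k ∈ J, mink (e k) (z + ε • u) < 0 :=
    (Filter.eventually_all_finset J).2 fun k hk => eventually_mink_neg (hJ k hk) u
  have h2 := ((eventually_mem_futureCone hz u).and h1).filter_mono
    (nhdsWithin_le_nhds (s := Set.Ioi 0))
  obtain ⟨ε, h, hε⟩ := (h2.and self_mem_nhdsWithin).exists
  exact ⟨ε, hε, h⟩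

namespace HypPolyhedron

variable {n : ℕ}

/-- In a right-angled polyhedron two facets that meet in codimension two are orthogonal. -/
lemma mink_eq_zero_of_adjacent {P : HypPolyhedron n} (hra : P.IsRightAngled) {i j : Fin P.m}
    (hij : i ≠ j) (hind : ∀ a b : ℝ, a • P.e i + b • P.e j = 0 → a = 0 ∧ b = 0)
    {z : Fin (n + 1) → ℝ} (hz : z ∈ futureCone n) (hzi : mink (P.e i) z = 0)
    (hzj : mink (P.e j) z = 0)
    (hnhd : ∀ u, mink (P.e i) u = 0 → mink (P.e j) u = 0 →
      ∃ ε : ℝ, 0 < ε ∧ z + ε • u ∈ futureCone n ∧ ∀ k, mink (P.e k) (z + ε • u) ≤ 0) :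
    mink (P.e i) (P.e j) = 0 := by
  set s := spatialPart (P.e i) with hs
  set t := spatialPart (P.e j) with ht
  set F : Set (EuclideanSpace ℝ (Fin n)) :=
    {p ∈ P.cl | mink (P.e i) (kleinLift p) = 0 ∧ mink (P.e j) (kleinLift p) = 0} with hF
  set q := kleinMap z with hq
  have hzq : z 0 • kleinLift q = z := smul_kleinLift_kleinMap hz.2.ne'
  have hlift : ∀ x : Fin (n + 1) → ℝ, mink x z = 0 → mink x (kleinLift q) = 0 := by
    intro x hx
    rw [← hzq, mink_smul_right] at hx
    exact (mul_eq_zero.1 hx).resolve_left hz.2.ne'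
  have hnhd' : ∀ u : EuclideanSpace ℝ (Fin n), inner ℝ s u = 0 → inner ℝ t u = 0 →
      ∃ ε : ℝ, 0 < ε ∧ q + ε • u ∈ F := by
    intro u hsu htu
    rw [hs, ← mink_spatial] at hsu
    rw [ht, ← mink_spatial] at htu
    obtain ⟨ε, hε, h1, h2⟩ := hnhd (spatial u) hsu htu
    have hz0 := hz.2
    have heq : z + ε • spatial u = z 0 • kleinLift (q + (ε / z 0) • u) := by
      rw [kleinLift_add, smul_add, hzq, smul_smul, mul_div_cancel₀ _ hz0.ne']
    rw [heq] at h1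
    refine ⟨ε / z 0, by positivity, P.mem_cl_of_mem ?_ fun k => ?_, ?_, ?_⟩
    · simpa [smul_smul, inv_mul_cancel₀ hz0.ne'] using smul_mem_futureCone (inv_pos.2 hz0) h1
    · have := h2 k
      rw [heq, mink_smul_right] at this
      exact nonpos_of_mul_nonpos_right this hz0
    · rw [kleinLift_add, mink_add_right, hlift _ hzi, mink_smul_right, hsu]; simp
    · rw [kleinLift_add, mink_add_right, hlift _ hzj, mink_smul_right, htu]; simp
  have hqF : q ∈ F := by
    obtain ⟨ε, -, h⟩ := hnhd' 0 (by simp) (by simp)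
    simpa using h
  have hspan : vectorSpan ℝ F = (Submodule.span ℝ {s, t})ᗮ := by
    apply le_antisymm
    · rw [vectorSpan, Submodule.span_le]
      rintro _ ⟨a, ha, b, hb, rfl⟩
      have h1 := ha.2
      have h2 := hb.2
      rw [mink_kleinLift, mink_kleinLift] at h1 h2
      rw [SetLike.mem_coe, Submodule.mem_orthogonal]
      intro x hx
      obtain ⟨c, d, rfl⟩ := Submodule.mem_span_pair.1 hx
      simp only [vsub_eq_sub, inner_add_left, inner_sub_right, real_inner_smul_left]
      have h3 : inner ℝ s a = inner ℝ s b := by simp only [hs]; linarith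
      have h4 : inner ℝ t a = inner ℝ t b := by simp only [ht]; linarith
      rw [h3, h4]; ring
    · intro u hu
      rw [Submodule.mem_orthogonal] at hu
      obtain ⟨ε, hε, h⟩ := hnhd' u (hu s (Submodule.subset_span (by simp)))
        (hu t (Submodule.subset_span (by simp)))
      have h1 := vsub_mem_vectorSpan ℝ h hqF
      rw [vsub_eq_sub, add_sub_cancel_left] at h1
      simpa [smul_smul, inv_mul_cancel₀ hε.ne'] using Submodule.smul_mem _ ε⁻¹ h1
  have hli : LinearIndependent ℝ ![s, t] := by
    rw [LinearIndependent.pair_iff]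
    intro a b hab
    refine hind a b ?_
    have h1 : ∀ k : Fin n, a * P.e i k.succ + b * P.e j k.succ = 0 := fun k => by
      simpa [hs, ht, spatialPart] using congrArg (fun v : EuclideanSpace ℝ (Fin n) => v k) hab
    have h2 : mink (a • P.e i + b • P.e j) z = 0 := by
      rw [mink_add_left, mink_smul_left, mink_smul_left, hzi, hzj]; simp
    simp only [mink, Pi.add_apply, Pi.smul_apply, smul_eq_mul, h1, zero_mul,
      Finset.sum_const_zero, add_zero, neg_eq_zero, mul_eq_zero, hz.2.ne', or_false] at h2
    funext k
    induction k using Fin.cases with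
    | zero => simpa using h2
    | succ k => simpa using h1 k
  have hdim : sdim F = n - 2 := by
    have h1 := finrank_span_eq_card hli
    have h2 := Submodule.finrank_add_finrank_orthogonal (Submodule.span ℝ {s, t})
    rw [show Set.range ![s, t] = {s, t} by simp [Set.pair_comm]] at h1
    simp only [Fintype.card_fin] at h1
    rw [h1, finrank_euclideanSpace_fin] at h2
    rw [sdim, hspan]
    omega
  have hexp : IsExposed ℝ P.cl F := by
    intro _
    refine ⟨innerSL ℝ (s + t), ?_⟩
    have hval : ∀ p, inner ℝ (s + t) p = mink (P.e i) (kleinLift p) + mink (P.e j) (kleinLift p)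
        + (P.e i 0 + P.e j 0) := fun p => by
      rw [inner_add_left, mink_kleinLift, mink_kleinLift]; ring
    ext p
    simp only [hF, Set.mem_ofPred_eq, innerSL_apply_apply, hval]
    refine and_congr_right fun hp => ⟨fun h y hy => ?_, fun h => ?_⟩
    · have := (P.norm_le_and_mink_nonpos_of_mem_cl hy).2
      linarith [this i, this j, h.1, h.2]
    · have h1 := h q hqF.1
      have h2 := (P.norm_le_and_mink_nonpos_of_mem_cl hp).2
      have h3 := hqF.2
      constructor <;> linarith [h2 i, h2 j, h3.1, h3.2]
  refine hra i j hij ⟨F, ⟨hexp, ⟨q, hqF⟩, hdim⟩, ?_, ?_⟩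
  · intro x hx hxF
    rw [← smul_kleinLift_kleinMap hx.1.2.ne', mink_smul_right, hxF.2.1, mul_zero]
  · intro x hx hxF
    rw [← smul_kleinLift_kleinMap hx.1.2.ne', mink_smul_right, hxF.2.2, mul_zero]

/-- The facets of a right-angled polyhedron: an irredundant set of bounding hyperplanes. Distinct
facet normals form non-acute angles and are orthogonal if the facets share a point of
hyperbolic space. -/
structure FacetSystem (P : HypPolyhedron n) (I : Finset (Fin P.m)) : Prop where
  le_zero : ∀ x ∈ futureCone n, (∀ i ∈ I, mink (P.e i) x ≤ 0) → ∀ i, mink (P.e i) x ≤ 0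
  nonpos : ∀ i ∈ I, ∀ j ∈ I, i ≠ j → mink (P.e i) (P.e j) ≤ 0
  orthogonal : ∀ w ∈ futureCone n, ∀ i ∈ I, ∀ j ∈ I, i ≠ j →
    mink (P.e i) w = 0 → mink (P.e j) w = 0 → mink (P.e i) (P.e j) = 0

lemma independent_of_separated {P : HypPolyhedron n} {i j : Fin P.m} {z : Fin (n + 1) → ℝ}
    (hi : mink (P.e i) z = 0) (hj : mink (P.e j) z < 0) (a b : ℝ)
    (h : a • P.e i + b • P.e j = 0) : a = 0 ∧ b = 0 := by
  have h1 : mink (a • P.e i + b • P.e j) z = 0 := by rw [h, mink_comm, mink_zero_right]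
  rw [mink_add_left, mink_smul_left, mink_smul_left, hi, mul_zero, zero_add] at h1
  have hb : b = 0 := (mul_eq_zero.1 h1).resolve_right hj.ne
  refine ⟨?_, hb⟩
  rw [hb, zero_smul, add_zero] at h
  have h2 : mink (a • P.e i) (P.e i) = 0 := by rw [h, mink_comm, mink_zero_right]
  rwa [mink_smul_left, P.unit, mul_one] at h2

lemma exists_facetSystem {P : HypPolyhedron n} (hra : P.IsRightAngled) :
    ∃ I, FacetSystem P I := by
  classical
  obtain ⟨p, hp, hpe⟩ := P.exists_interior_point
  obtain ⟨I, -, hdef, hirr⟩ := exists_irredundant_subsystem (futureCone n)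
    (fun i x => mink (P.e i) x) Finset.univ
  have hdef' : ∀ x ∈ futureCone n, (∀ i ∈ I, mink (P.e i) x ≤ 0) → ∀ i, mink (P.e i) x ≤ 0 :=
    fun x hx h i => hdef x hx h i (Finset.mem_univ i)
  have hfacet : ∀ i ∈ I, ∃ z ∈ futureCone n, mink (P.e i) z = 0 ∧
      ∀ k ∈ I, k ≠ i → mink (P.e k) z < 0 := by
    intro i hi
    obtain ⟨x, hx, hxI, hxi⟩ := hirr i hi
    obtain ⟨z, hz, h1, h2, -⟩ := exists_facet_point hp hx (fun k _ => hpe k) hi hxI hxi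
    exact ⟨z, hz, h1, h2⟩
  have hnonpos : ∀ i ∈ I, ∀ j ∈ I, i ≠ j → mink (P.e i) (P.e j) ≤ 0 := by
    intro i hi k hk hik
    obtain ⟨y, hy, hyi, hyI⟩ := hfacet i hi
    obtain ⟨J, hJI, hJdef, hJirr⟩ := exists_irredundant_subsystem
      {x ∈ futureCone n | mink (P.e i) x = 0} (fun i x => mink (P.e i) x) (I.erase i)
    have hyJ : ∀ j ∈ J, mink (P.e j) y < 0 := fun j hj =>
      hyI j (Finset.mem_of_mem_erase (hJI hj)) (Finset.ne_of_mem_erase (hJI hj))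
    have hJall : ∀ x ∈ futureCone n, mink (P.e i) x = 0 → (∀ j ∈ J, mink (P.e j) x ≤ 0) →
        ∀ l, mink (P.e l) x ≤ 0 := by
      intro x hx hxi hxJ
      refine hdef' x hx fun l hl => ?_
      by_cases hli : l = i
      · rw [hli, hxi]
      · exact hJdef x ⟨hx, hxi⟩ hxJ l (Finset.mem_erase.2 ⟨hli, hl⟩)
    have horth : ∀ j ∈ J, mink (P.e i) (P.e j) = 0 := by
      intro j hj
      have hji : j ≠ i := Finset.ne_of_mem_erase (hJI hj)
      obtain ⟨x, ⟨hx, hxi⟩, hxJ, hxj⟩ := hJirr j hj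
      obtain ⟨z, hz, hzj, hzJ, hzy⟩ := exists_facet_point hy hx hyJ hj hxJ hxj
      have hzi := hzy _ hyi hxi
      refine mink_eq_zero_of_adjacent hra hji.symm
        (independent_of_separated hyi (hyJ j hj)) hz hzi hzj fun u hui huj => ?_
      obtain ⟨ε, hε, h1, h2⟩ := exists_pos_small (e := P.e) hz u (J.erase j)
        fun k hk => hzJ k (Finset.mem_of_mem_erase hk) (Finset.ne_of_mem_erase hk)
      refine ⟨ε, hε, h1, hJall _ h1 ?_ fun k hk => ?_⟩
      · rw [mink_add_right, mink_smul_right, hzi, hui]; simp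
      · by_cases hkj : k = j
        · rw [hkj, mink_add_right, mink_smul_right, hzj, huj]; simp
        · exact (h2 k (Finset.mem_erase.2 ⟨hkj, hk⟩)).le
    obtain ⟨x, hx, hxk, hxI⟩ := hfacet k hk
    have hxi : mink (P.e i) x < 0 := hxI i hi hik
    set q := x - mink (P.e i) x • P.e i with hq
    have hqe : ∀ l, mink (P.e l) q = mink (P.e l) x - mink (P.e i) x * mink (P.e l) (P.e i) :=
      fun l => by rw [hq, mink_sub_right, mink_smul_right]
    have hqi : mink (P.e i) q = 0 := by rw [hqe, P.unit]; ring
    have hxq : mink x q < 0 := by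
      rw [hq, mink_sub_right, mink_smul_right, mink_comm x (P.e i)]
      nlinarith [hx.1]
    have hqq : mink q q = mink x q := by
      conv_lhs => rw [hq]
      rw [mink_sub_left, mink_smul_left, hqi]; ring
    have hqF := mem_futureCone_of_mink_neg hx (hqq ▸ hxq) hxq
    have hxall := hdef' x hx fun l hl => by
      by_cases hlk : l = k
      · rw [hlk, hxk]
      · exact (hxI l hl hlk).le
    have := hJall q hqF hqi (fun j hj => by
      rw [hqe, mink_comm (P.e j) (P.e i), horth j hj, mul_zero, sub_zero]; exact hxall j) k
    rw [hqe, hxk, mink_comm (P.e k)] at this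
    nlinarith
  refine ⟨I, hdef', hnonpos, fun w hw i hi j hj hij hwi hwj => ?_⟩
  obtain ⟨y, hy, hyi, hyI⟩ := hfacet i hi
  have hind := independent_of_separated hyi (hyI j hj hij.symm)
  have hsum : P.e i + P.e j ≠ 0 := fun h => by
    simpa using (hind 1 1 (by simpa using h)).1
  have hpos := mink_self_pos_of_orthogonal hw (y := P.e i + P.e j)
    (by rw [mink_add_right, mink_comm, hwi, mink_comm, hwj, add_zero]) hsum
  rw [mink_add_left, mink_add_right, mink_add_right, P.unit, P.unit, mink_comm (P.e j)] at hpos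
  have hc := hnonpos i hi j hj hij
  set c := mink (P.e i) (P.e j) with hcdef
  have hD : 0 < 1 - c ^ 2 := by nlinarith
  have hpi := hpe i
  have hpj := hpe j
  set α := (-mink (P.e i) p + c * mink (P.e j) p) / (1 - c ^ 2) with hα
  set β := (-mink (P.e j) p + c * mink (P.e i) p) / (1 - c ^ 2) with hβ
  have hα0 : 0 < α := div_pos (by nlinarith) hD
  have hβ0 : 0 < β := div_pos (by nlinarith) hD
  set q := p + (α • P.e i + β • P.e j) with hq
  have hqe : ∀ l, mink (P.e l) q =
      mink (P.e l) p + (α * mink (P.e l) (P.e i) + β * mink (P.e l) (P.e j)) := fun l => by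
    rw [hq, mink_add_right, mink_add_right, mink_smul_right, mink_smul_right]
  have hqi : mink (P.e i) q = 0 := by
    rw [hqe, P.unit, ← hcdef, hα, hβ]; field_simp; ring
  have hqj : mink (P.e j) q = 0 := by
    rw [hqe, P.unit, mink_comm (P.e j) (P.e i), ← hcdef, hα, hβ]; field_simp; ring
  have hpq : mink p q < 0 := by
    rw [hq, mink_add_right, mink_add_right, mink_smul_right, mink_smul_right,
      mink_comm p (P.e i), mink_comm p (P.e j)]
    nlinarith [hp.1]
  have hqq : mink q q = mink p q := by
    conv_lhs => rw [hq]
    rw [mink_add_left, mink_add_left, mink_smul_left, mink_smul_left, hqi, hqj]; ring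
  have hqF := mem_futureCone_of_mink_neg hp (hqq ▸ hpq) hpq
  refine mink_eq_zero_of_adjacent hra hij hind hqF hqi hqj fun u hui huj => ?_
  obtain ⟨ε, hε, h1, h2⟩ := exists_pos_small (e := P.e) hqF u ((I.erase i).erase j) fun k hk => by
    simp only [Finset.mem_erase] at hk
    rw [hqe]
    nlinarith [hpe k, hnonpos k hk.2.2 i hi hk.2.1, hnonpos k hk.2.2 j hj hk.1]
  refine ⟨ε, hε, h1, hdef' _ h1 fun k hk => ?_⟩
  by_cases hki : k = i
  · rw [hki, mink_add_right, mink_smul_right, hqi, hui]; simp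
  by_cases hkj : k = j
  · rw [hkj, mink_add_right, mink_smul_right, hqj, huj]; simp
  exact (h2 k (by simp [hki, hkj, hk])).le

end HypPolyhedron

/-! ### Polyhedral cones with right-angled finite vertices and one cusp -/

lemma card_le_of_orthogonal {n : ℕ} {ι : Type*} [Fintype ι] (b : ι → Fin (n + 1) → ℝ)
    (horth : ∀ i j, i ≠ j → mink (b i) (b j) = 0) (hne : ∀ i, mink (b i) (b i) ≠ 0) :
    Fintype.card ι ≤ n + 1 := by
  have hli : LinearIndependent ℝ b :=
    LinearMap.linearIndependent_of_isOrthoᵢ (B := minkForm n)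
      (LinearMap.isOrthoᵢ_def.2 horth) hne
  simpa using hli.fintype_card_le_finrank

lemma card_le_of_orthonormal {n : ℕ} {ι : Type*} {e : ι → Fin (n + 1) → ℝ} {A : Finset ι}
    {w : Fin (n + 1) → ℝ} (hw : w ∈ futureCone n) (hunit : ∀ i ∈ A, mink (e i) (e i) = 1)
    (horth : ∀ i ∈ A, ∀ j ∈ A, i ≠ j → mink (e i) (e j) = 0)
    (hwA : ∀ i ∈ A, mink (e i) w = 0) : A.card ≤ n := by
  have := card_le_of_orthogonal (fun k : Option A => k.elim w fun i => e i) ?_ ?_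
  · simpa using this
  · rintro (_ | i) (_ | j) hij
    · exact absurd rfl hij
    · simpa [mink_comm w] using hwA j j.2
    · simpa using hwA i i.2
    · exact horth i i.2 j j.2 fun h => hij (by rw [Subtype.ext h])
  · rintro (_ | i)
    · exact hw.1.ne
    · simp [hunit i i.2]

lemma exists_expansion {n : ℕ} {ι : Type*} {e : ι → Fin (n + 1) → ℝ} {A : Finset ι}
    {w : Fin (n + 1) → ℝ} (hw : w ∈ futureCone n) (hunit : ∀ i ∈ A, mink (e i) (e i) = 1)
    (horth : ∀ i ∈ A, ∀ j ∈ A, i ≠ j → mink (e i) (e j) = 0)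
    (hwA : ∀ i ∈ A, mink (e i) w = 0) (hA : A.card = n) (x : Fin (n + 1) → ℝ) :
    ∃ c : ℝ, x = ∑ k ∈ A, mink x (e k) • e k + c • w := by
  refine ⟨mink x w / mink w w, ?_⟩
  set y := x - (∑ k ∈ A, mink x (e k) • e k + (mink x w / mink w w) • w) with hy
  suffices h : y = 0 from sub_eq_zero.1 h
  have hyw : mink w y = 0 := by
    rw [mink_comm, hy, mink_sub_left, mink_add_left, mink_sum_left, mink_smul_left,
      div_mul_cancel₀ _ hw.1.ne, Finset.sum_eq_zero]
    · ring
    · intro k hk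
      rw [mink_smul_left, hwA k hk, mul_zero]
  have hye : ∀ k ∈ A, mink (e k) y = 0 := by
    intro k hk
    rw [mink_comm, hy, mink_sub_left, mink_add_left, mink_sum_left, mink_smul_left,
      mink_comm w (e k), hwA k hk, Finset.sum_eq_single k]
    · rw [mink_smul_left, hunit k hk]; ring
    · intro j hj hjk
      rw [mink_smul_left, horth j hj k hk hjk, mul_zero]
    · exact fun h => absurd hk h
  by_contra hy0
  have hpos := mink_self_pos_of_orthogonal hw hyw hy0
  have := card_le_of_orthogonal
    (fun k : Option (Option A) => k.elim y fun k => k.elim w fun i => e i) ?_ ?_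
  · simp [hA] at this
  · rintro (_ | _ | i) (_ | _ | j) hij
    · exact absurd rfl hij
    · simpa [mink_comm y] using hyw
    · simpa [mink_comm y] using hye j j.2
    · simpa using hyw
    · exact absurd rfl hij
    · simpa [mink_comm w] using hwA j j.2
    · simpa using hye i i.2
    · simpa using hwA i i.2
    · exact horth i i.2 j j.2 fun h => hij (by rw [Subtype.ext h])
  · rintro (_ | _ | i)
    · exact hpos.ne'
    · exact hw.1.ne
    · simp [hunit i i.2]

open Classical in
/-- The indices in `I` of the hyperplanes through `w`. -/
def activeSet {n : ℕ} {ι : Type*} (e : ι → Fin (n + 1) → ℝ) (I : Finset ι)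
    (w : Fin (n + 1) → ℝ) : Finset ι := I.filter fun i => mink (e i) w = 0

lemma mem_activeSet {n : ℕ} {ι : Type*} {e : ι → Fin (n + 1) → ℝ} {I : Finset ι}
    {w : Fin (n + 1) → ℝ} {i : ι} : i ∈ activeSet e I w ↔ i ∈ I ∧ mink (e i) w = 0 := by
  simp [activeSet]

/-- A polyhedral cone over a five-dimensional hyperbolic polyhedron, with facet normals `e i`,
`i ∈ I`, generated by finitely many timelike vectors `V`, at each of which the polyhedron is simple
and right-angled, and a single lightlike vector `v`. -/
structure OneCuspCone {ι : Type*} (e : ι → Fin (5 + 1) → ℝ) (I : Finset ι)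
    (V : Finset (Fin (5 + 1) → ℝ)) (v : Fin (5 + 1) → ℝ) : Prop where
  unit : ∀ i, mink (e i) (e i) = 1
  ne_smul : ∀ i ∈ I, ∀ j ∈ I, i ≠ j → ∀ c : ℝ, e i ≠ c • e j
  fut : ∀ w ∈ V, w ∈ futureCone 5
  time : ∀ w ∈ V, w 0 = 1
  null : mink v v = 0
  neg : ∀ w ∈ V, mink w v < 0
  le : ∀ w ∈ V, ∀ i ∈ I, mink (e i) w ≤ 0
  le_cusp : ∀ i ∈ I, mink (e i) v ≤ 0
  card : ∀ w ∈ V, (activeSet e I w).card = 5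
  orth : ∀ w ∈ V, ∀ i ∈ activeSet e I w, ∀ j ∈ activeSet e I w, i ≠ j → mink (e i) (e j) = 0
  gen : ∀ x ∈ futureCone 5, (∀ i ∈ I, mink (e i) x ≤ 0) →
    ∃ (c : (Fin (5 + 1) → ℝ) → ℝ) (d : ℝ), (∀ w ∈ V, 0 ≤ c w) ∧ 0 ≤ d ∧
      x = ∑ w ∈ V, c w • w + d • v

/-- `w` is a vertex of the polygonal face `T`, with adjacent sides `i` and `j`. -/
structure IsPolygonCorner {ι : Type*} [DecidableEq ι] (e : ι → Fin (5 + 1) → ℝ) (I : Finset ι)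
    (V : Finset (Fin (5 + 1) → ℝ)) (T : Finset ι) (w : Fin (5 + 1) → ℝ) (i j : ι) : Prop where
  mem : w ∈ V
  active : activeSet e I w = insert i (insert j T)
  ne : i ≠ j
  left : i ∉ T
  right : j ∉ T

namespace OneCuspCone

variable {ι : Type*} {e : ι → Fin (5 + 1) → ℝ} {I : Finset ι}
  {V : Finset (Fin (5 + 1) → ℝ)} {v : Fin (5 + 1) → ℝ}

lemma expansion (h : OneCuspCone e I V v) {w : Fin (5 + 1) → ℝ} (hw : w ∈ V)
    (x : Fin (5 + 1) → ℝ) : ∃ c : ℝ, x = ∑ k ∈ activeSet e I w, mink x (e k) • e k + c • w :=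
  exists_expansion (h.fut w hw) (fun i _ => h.unit i) (h.orth w hw)
    (fun _ hi => (mem_activeSet.1 hi).2) (h.card w hw) x

variable [DecidableEq ι]

lemma exists_pos_edge (h : OneCuspCone e I V v) {w : Fin (5 + 1) → ℝ} (hw : w ∈ V) {i : ι}
    (hi : i ∈ activeSet e I w) :
    ∃ ε : ℝ, 0 < ε ∧ w + ε • (-e i) ∈ futureCone 5 ∧ ∀ k ∈ I, mink (e k) (w + ε • (-e i)) ≤ 0 := by
  obtain ⟨ε, hε, h1, h2⟩ := exists_pos_small (e := e) (h.fut w hw) (-e i) (I \ activeSet e I w)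
    fun k hk => by
      rw [Finset.mem_sdiff, mem_activeSet] at hk
      exact lt_of_le_of_ne (h.le w hw k hk.1) fun h0 => hk.2 ⟨hk.1, h0⟩
  refine ⟨ε, hε, h1, fun k hk => ?_⟩
  by_cases hka : k ∈ activeSet e I w
  · rw [mink_add_right, (mem_activeSet.1 hka).2, mink_smul_right, mink_neg_right]
    by_cases hki : k = i
    · rw [hki, h.unit]; linarith
    · rw [h.orth w hw k hka i hi hki]; simp
  · exact (h2 k (Finset.mem_sdiff.2 ⟨hk, hka⟩)).le

/-- The edge at `w` leaving the `i`-th facet contains another vertex. -/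
lemma exists_neighbor (h : OneCuspCone e I V v) {w : Fin (5 + 1) → ℝ} (hw : w ∈ V) {i : ι}
    (hi : i ∈ activeSet e I w) :
    ∃ u, (u ∈ V ∨ u = v) ∧ (∀ k ∈ activeSet e I w, k ≠ i → mink (e k) u = 0) ∧
      mink (e i) u < 0 := by
  obtain ⟨ε, hε, hx, hxI⟩ := h.exists_pos_edge hw hi
  obtain ⟨c, d, hc, hd, hxe⟩ := h.gen _ hx hxI
  have hval : ∀ k ∈ activeSet e I w, ∑ u ∈ V, c u * mink (e k) u + d * mink (e k) v =
      -(ε * mink (e k) (e i)) := by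
    intro k hk
    have := congrArg (mink (e k)) hxe
    rw [mink_add_right, mink_add_right, mink_sum_right, mink_smul_right, mink_smul_right,
      (mem_activeSet.1 hk).2, mink_neg_right] at this
    simp only [mink_smul_right] at this
    linarith
  have hterm : ∀ k ∈ I, ∀ u ∈ V, c u * mink (e k) u ≤ 0 := fun k hk u hu =>
    mul_nonpos_of_nonneg_of_nonpos (hc u hu) (h.le u hu k hk)
  have hterm' : ∀ k ∈ I, d * mink (e k) v ≤ 0 := fun k hk =>
    mul_nonpos_of_nonneg_of_nonpos hd (h.le_cusp k hk)
  have hzero : ∀ k ∈ activeSet e I w, k ≠ i →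
      (∀ u ∈ V, c u * mink (e k) u = 0) ∧ d * mink (e k) v = 0 := by
    intro k hk hki
    have hkI := (mem_activeSet.1 hk).1
    have h1 := hval k hk
    rw [h.orth w hw k hk i hi hki, mul_zero, neg_zero] at h1
    have h2 := Finset.sum_nonpos (hterm k hkI)
    have h3 := hterm' k hkI
    refine ⟨(Finset.sum_eq_zero_iff_of_nonpos (hterm k hkI)).1 ?_, ?_⟩ <;> linarith
  have hi0 := hval i hi
  rw [h.unit, mul_one] at hi0
  have hiI := (mem_activeSet.1 hi).1
  by_cases hvi : d * mink (e i) v < 0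
  · have hd0 : d ≠ 0 := fun h0 => by simp [h0] at hvi
    exact ⟨v, Or.inr rfl, fun k hk hki => (mul_eq_zero.1 (hzero k hk hki).2).resolve_left hd0,
      lt_of_le_of_ne (h.le_cusp i hiI) fun h0 => by simp [h0] at hvi⟩
  · obtain ⟨u, hu, hneg⟩ : ∃ u ∈ V, c u * mink (e i) u < 0 := by
      by_contra! hcon
      have := Finset.sum_nonneg hcon
      linarith
    have hd0 : c u ≠ 0 := fun h0 => by simp [h0] at hneg
    exact ⟨u, Or.inl hu,
      fun k hk hki => (mul_eq_zero.1 ((hzero k hk hki).1 u hu)).resolve_left hd0,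
      lt_of_le_of_ne (h.le u hu i hiI) fun h0 => by simp [h0] at hneg⟩

lemma isCorner_symm {T : Finset ι} {w : Fin (5 + 1) → ℝ} {i j : ι}
    (hw : IsPolygonCorner e I V T w i j) : IsPolygonCorner e I V T w j i :=
  ⟨hw.mem, by rw [hw.active, Finset.insert_comm], hw.ne.symm, hw.right, hw.left⟩

lemma exists_isCorner_of_mem (h : OneCuspCone e I V v) {T : Finset ι} (hT : T.card = 3)
    {w : Fin (5 + 1) → ℝ} (hw : w ∈ V) (hTw : T ⊆ activeSet e I w) {i : ι}
    (hi : i ∈ activeSet e I w) (hiT : i ∉ T) : ∃ j, IsPolygonCorner e I V T w i j := by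
  have hsub : insert i T ⊆ activeSet e I w := Finset.insert_subset hi hTw
  have hcard : (activeSet e I w \ insert i T).card = 1 := by
    rw [Finset.card_sdiff_of_subset hsub, h.card w hw, Finset.card_insert_of_notMem hiT, hT]
  obtain ⟨j, hj⟩ := Finset.card_eq_one.1 hcard
  have hj' : j ∈ activeSet e I w \ insert i T := by rw [hj]; simp
  rw [Finset.mem_sdiff, Finset.mem_insert, not_or] at hj'
  refine ⟨j, hw, ?_, fun hij => hj'.2.1 hij.symm, hiT, hj'.2.2⟩
  rw [← Finset.sdiff_union_of_subset hsub, hj, Finset.insert_comm]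
  rfl

lemma exists_isCorner (h : OneCuspCone e I V v) {T : Finset ι} (hT : T.card = 3)
    {w : Fin (5 + 1) → ℝ} (hw : w ∈ V) (hTw : T ⊆ activeSet e I w) :
    ∃ i j, IsPolygonCorner e I V T w i j := by
  obtain ⟨i, hi, hiT⟩ : ∃ i ∈ activeSet e I w, i ∉ T :=
    Finset.exists_mem_notMem_of_card_lt_card (by rw [hT, h.card w hw]; norm_num)
  exact ⟨i, h.exists_isCorner_of_mem hT hw hTw hi hiT⟩

section Corner

variable {T : Finset ι} {w : Fin (5 + 1) → ℝ} {i j : ι}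

lemma mem_active_iff (hw : IsPolygonCorner e I V T w i j) {k : ι} :
    k ∈ activeSet e I w ↔ k = i ∨ k = j ∨ k ∈ T := by
  rw [hw.active, Finset.mem_insert, Finset.mem_insert]

lemma mem_filter_of_isCorner (hw : IsPolygonCorner e I V T w i j) :
    w ∈ V.filter fun w => T ⊆ activeSet e I w :=
  Finset.mem_filter.2 ⟨hw.mem, fun _ hk => (mem_active_iff hw).2 (Or.inr (Or.inr hk))⟩

lemma orth_sides (h : OneCuspCone e I V v) (hw : IsPolygonCorner e I V T w i j) :
    mink (e i) (e j) = 0 :=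
  h.orth w hw.mem i ((mem_active_iff hw).2 (by simp)) j ((mem_active_iff hw).2 (by simp)) hw.ne

lemma orth_left (h : OneCuspCone e I V v) (hw : IsPolygonCorner e I V T w i j) {k : ι}
    (hk : k ∈ T) : mink (e i) (e k) = 0 :=
  h.orth w hw.mem i ((mem_active_iff hw).2 (by simp)) k ((mem_active_iff hw).2 (by simp [hk]))
    fun hik => hw.left (hik ▸ hk)

lemma mem_left (hw : IsPolygonCorner e I V T w i j) : i ∈ I :=
  (mem_activeSet.1 ((mem_active_iff hw).2 (Or.inl rfl))).1

lemma corner_expansion (h : OneCuspCone e I V v) (hw : IsPolygonCorner e I V T w i j)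
    {x : Fin (5 + 1) → ℝ} (hx : ∀ k ∈ T, mink x (e k) = 0) :
    ∃ c : ℝ, x = mink x (e i) • e i + mink x (e j) • e j + c • w := by
  obtain ⟨c, hc⟩ := h.expansion hw.mem x
  refine ⟨c, ?_⟩
  conv_lhs => rw [hc]
  rw [hw.active, Finset.sum_insert (by simp [hw.ne, hw.left]), Finset.sum_insert hw.right,
    Finset.sum_eq_zero fun k hk => by rw [hx k hk, zero_smul], add_zero]

/-- Following the side `j` from `w` one reaches another finite vertex or the cusp. -/
lemma exists_next (h : OneCuspCone e I V v) (hT : T.card = 3) (hw : IsPolygonCorner e I V T w i j) :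
    (∃ u k, IsPolygonCorner e I V T u j k ∧ k ≠ i) ∨
      ((∀ k ∈ T, mink (e k) v = 0) ∧ mink (e j) v = 0 ∧ mink (e i) v < 0) := by
  obtain ⟨u, hu, hu0, hui⟩ := h.exists_neighbor hw.mem ((mem_active_iff hw).2 (Or.inl rfl))
  have huT : ∀ k ∈ T, mink (e k) u = 0 := fun k hk =>
    hu0 k ((mem_active_iff hw).2 (by simp [hk])) fun hki => hw.left (hki ▸ hk)
  have huj : mink (e j) u = 0 := hu0 j ((mem_active_iff hw).2 (by simp)) hw.ne.symm
  rcases hu with hu | rfl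
  · left
    have hact : ∀ k, k ∈ activeSet e I w → mink (e k) u = 0 → k ∈ activeSet e I u :=
      fun k hk h0 => mem_activeSet.2 ⟨(mem_activeSet.1 hk).1, h0⟩
    obtain ⟨k, hk⟩ := h.exists_isCorner_of_mem hT hu
      (fun k hk => hact k ((mem_active_iff hw).2 (by simp [hk])) (huT k hk))
      (hact j ((mem_active_iff hw).2 (by simp)) huj) hw.right
    refine ⟨u, k, hk, ?_⟩
    rintro rfl
    exact hui.ne (mem_activeSet.1 ((mem_active_iff hk).2 (by simp))).2
  · exact Or.inr ⟨huT, huj, hui⟩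

lemma ne_of_isCorner {u : Fin (5 + 1) → ℝ} {k l : ι} (hw : IsPolygonCorner e I V T w i j)
    (hu : IsPolygonCorner e I V T u k l) (hik : i ≠ k) (hil : i ≠ l) : w ≠ u := by
  rintro rfl
  rcases (mem_active_iff hu).1 ((mem_active_iff hw).2 (Or.inl rfl)) with h | h | h
  exacts [hik h, hil h, hw.left h]

/-- A right-angled polygon through the cusp has at least three finite vertices. -/
lemma three_le_card (h : OneCuspCone e I V v) (hT : T.card = 3) (hwV : w ∈ V)
    (hTw : T ⊆ activeSet e I w) :
    3 ≤ (V.filter fun w => T ⊆ activeSet e I w).card := by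
  obtain ⟨i, j, hw⟩ := h.exists_isCorner hT hwV hTw
  have hthree : ∀ {a b c : Fin (5 + 1) → ℝ}, a ∈ (V.filter fun w => T ⊆ activeSet e I w) →
      b ∈ (V.filter fun w => T ⊆ activeSet e I w) →
      c ∈ (V.filter fun w => T ⊆ activeSet e I w) → a ≠ b → a ≠ c → b ≠ c →
      3 ≤ (V.filter fun w => T ⊆ activeSet e I w).card := by
    intro a b c ha hb hc hab hac hbc
    exact Finset.two_lt_card.2 ⟨a, ha, b, hb, c, hc, hab, hac, hbc⟩
  have key : ∀ {i j u k}, IsPolygonCorner e I V T w i j → IsPolygonCorner e I V T u j k → k ≠ i →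
      mink (e i) v = 0 → 3 ≤ (V.filter fun w => T ⊆ activeSet e I w).card := by
    intro i j u k hw hu hki hv
    rcases h.exists_next hT hu with ⟨u', l, hu', hl⟩ | ⟨-, hkv, -⟩
    · exact hthree (mem_filter_of_isCorner hw) (mem_filter_of_isCorner hu)
        (mem_filter_of_isCorner hu') (ne_of_isCorner hw hu hw.ne hki.symm)
        (ne_of_isCorner hu' hw hki hu.ne.symm).symm (ne_of_isCorner hu hu' hu.ne hl.symm)
    · obtain ⟨c, hc⟩ := h.corner_expansion hw (x := e k)
        fun l hl => h.orth_left (isCorner_symm hu) hl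
      rw [mink_comm (e k) (e j), h.orth_sides hu, zero_smul, add_zero] at hc
      have h1 := congrArg (fun x => mink x v) hc
      simp only [mink_add_left, mink_smul_left, hkv, hv, mul_zero, zero_add] at h1
      have hc0 : c = 0 := (mul_eq_zero.1 h1.symm).resolve_right (h.neg w hw.mem).ne
      rw [hc0, zero_smul, add_zero] at hc
      exact absurd hc (h.ne_smul k (mem_left (isCorner_symm hu)) i (mem_left hw) hki _)
  have hw' := isCorner_symm hw
  rcases h.exists_next hT hw with ⟨u, k, hu, hki⟩ | ⟨-, hjv, hiv⟩
  · rcases h.exists_next hT hw' with ⟨u', l, hu', hlj⟩ | ⟨-, hiv, -⟩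
    · exact hthree (mem_filter_of_isCorner hw) (mem_filter_of_isCorner hu)
        (mem_filter_of_isCorner hu') (ne_of_isCorner hw hu hw.ne hki.symm)
        (ne_of_isCorner hw' hu' hw'.ne hlj.symm) (ne_of_isCorner hu hu' hw'.ne hlj.symm)
    · exact key hw hu hki hiv
  · rcases h.exists_next hT hw' with ⟨u', l, hu', hlj⟩ | ⟨-, hiv', -⟩
    · exact key hw' hu' hlj hjv
    · exact absurd hiv' hiv.ne

/-- A compact right-angled polygon has at least five vertices. -/
lemma five_le_card (h : OneCuspCone e I V v) (hT : T.card = 3) (hwV : w ∈ V)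
    (hTw : T ⊆ activeSet e I w) (hv : ¬ ∀ k ∈ T, mink (e k) v = 0) :
    5 ≤ (V.filter fun w => T ⊆ activeSet e I w).card := by
  have next : ∀ {w i j}, IsPolygonCorner e I V T w i j →
      ∃ u k, IsPolygonCorner e I V T u j k ∧ k ≠ i :=
    fun hw => (h.exists_next hT hw).resolve_right fun h0 => hv h0.1
  obtain ⟨i, j, hw⟩ := h.exists_isCorner hT hwV hTw
  have hw' := isCorner_symm hw
  obtain ⟨u, k, hu, hki⟩ := next hw
  obtain ⟨t, l, ht, hlj⟩ := next hw'
  obtain ⟨c, hc⟩ := h.corner_expansion hw (x := e l)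
    fun r hr => h.orth_left (isCorner_symm ht) hr
  rw [mink_comm (e l) (e i), h.orth_sides ht, zero_smul, zero_add] at hc
  obtain ⟨d, hd⟩ := h.corner_expansion hw (x := e k)
    fun r hr => h.orth_left (isCorner_symm hu) hr
  rw [mink_comm (e k) (e j), h.orth_sides hu, zero_smul, add_zero] at hd
  have hwi : mink (e i) w = 0 := (mem_activeSet.1 ((mem_active_iff hw).2 (by simp))).2
  have hwj : mink (e j) w = 0 := (mem_activeSet.1 ((mem_active_iff hw).2 (by simp))).2
  have hlk : l ≠ k := by
    rintro rfl
    rw [mink_comm (e l) (e j), h.orth_sides hu, zero_smul, zero_add] at hc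
    have h1 := h.unit l
    rw [hc, mink_smul_left, mink_smul_right] at h1
    nlinarith [(h.fut w hwV).1, mul_self_nonneg c]
  obtain ⟨u', k', hu', hk'⟩ := next hu
  obtain ⟨t', l', ht', hl'⟩ := next ht
  have htu : t' ≠ u' := by
    rintro rfl
    have hkl : mink (e k) (e l) = 0 := h.orth t' ht'.mem k ((mem_active_iff hu').2 (by simp)) l
      ((mem_active_iff ht').2 (by simp)) hlk.symm
    have h1 : c * d = 0 := by
      rw [hc, hd] at hkl
      simp only [mink_add_left, mink_add_right, mink_smul_left, mink_smul_right, mink_comm w,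
        hwi, hwj, h.orth_sides hw, mul_zero, zero_add, add_zero] at hkl
      have hww := (h.fut w hwV).1.ne
      rw [← mul_assoc, mul_eq_zero] at hkl
      exact hkl.resolve_right hww
    rcases mul_eq_zero.1 h1 with h0 | h0
    · rw [h0, zero_smul, add_zero] at hc
      exact h.ne_smul l (mem_left (isCorner_symm ht)) j (mem_left hw') hlj _ hc
    · rw [h0, zero_smul, add_zero] at hd
      exact h.ne_smul k (mem_left (isCorner_symm hu)) i (mem_left hw) hki _ hd
  have hsub : ({w, u, t, u', t'} : Finset (Fin (5 + 1) → ℝ)) ⊆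
      V.filter fun w => T ⊆ activeSet e I w := by
    simp only [Finset.insert_subset_iff, Finset.singleton_subset_iff]
    exact ⟨mem_filter_of_isCorner hw, mem_filter_of_isCorner hu, mem_filter_of_isCorner ht,
      mem_filter_of_isCorner hu', mem_filter_of_isCorner ht'⟩
  refine le_trans (le_of_eq ?_) (Finset.card_le_card hsub)
  have n1 : w ≠ u := ne_of_isCorner hw hu hw.ne hki.symm
  have n2 : w ≠ t := ne_of_isCorner hw' ht hw'.ne hlj.symm
  have n3 : w ≠ u' := (ne_of_isCorner hu' hw hki hu.ne.symm).symm
  have n4 : w ≠ t' := (ne_of_isCorner ht' hw ht.ne.symm hlj).symm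
  have n5 : u ≠ t := ne_of_isCorner hu ht hw'.ne hlj.symm
  have n6 : u ≠ u' := ne_of_isCorner hu hu' hu.ne hk'.symm
  have n7 : u ≠ t' := (ne_of_isCorner ht' hu hlj hlk).symm
  have n8 : t ≠ u' := (ne_of_isCorner hu' ht hki hlk.symm).symm
  have n9 : t ≠ t' := ne_of_isCorner ht ht' ht.ne hl'.symm
  simp [n1, n2, n3, n4, n5, n6, n7, n8, n9, htu.symm]

end Corner

end OneCuspCone

/-! ### Counting vertices and polygonal faces -/

section Counting

variable {α ι : Type*} [DecidableEq ι]

lemma choose_two_le_card_filter {A U : Finset ι} (hA : A.card = 5) (hU : U ⊆ A) :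
    U.card.choose 2 ≤ ((A.powersetCard 3).filter fun T => A \ T ⊆ U).card := by
  rw [← Finset.card_powersetCard]
  refine Finset.card_le_card_of_injOn (fun S => A \ S) (fun S hS => ?_) fun S hS S' hS' hSS' => ?_
  · obtain ⟨hSU, hS2⟩ := Finset.mem_powersetCard.1 hS
    refine Finset.mem_coe.2 (Finset.mem_filter.2 ⟨Finset.mem_powersetCard.2
      ⟨Finset.sdiff_subset, ?_⟩, ?_⟩)
    · rw [Finset.card_sdiff_of_subset (hSU.trans hU), hA, hS2]
    · rwa [Finset.sdiff_sdiff_eq_self (hSU.trans hU)]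
  · have h1 := (Finset.mem_powersetCard.1 hS).1.trans hU
    have h2 := (Finset.mem_powersetCard.1 hS').1.trans hU
    rw [← Finset.sdiff_sdiff_eq_self h1, ← Finset.sdiff_sdiff_eq_self h2]
    exact congrArg (A \ ·) hSS'

lemma choose_two_add_choose_two (u : ℕ) (hu : u ≤ 5) : 4 ≤ u.choose 2 + (5 - u).choose 2 := by
  interval_cases u <;> decide

lemma sum_card_filter_comm (V : Finset α) (A : α → Finset ι)
    (r : α → Finset ι → Prop) [∀ w T, Decidable (r w T)] :
    ∑ w ∈ V, (((A w).powersetCard 3).filter (r w)).card =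
      ∑ T ∈ V.biUnion fun w => (A w).powersetCard 3,
        (V.filter fun w => T ⊆ A w ∧ r w T).card := by
  refine Eq.trans ?_ (Finset.sum_card_bipartiteAbove_eq_sum_card_bipartiteBelow
    fun w T => T ⊆ A w ∧ r w T)
  refine Finset.sum_congr rfl fun w hw => congrArg Finset.card (Finset.ext fun T => ?_)
  simp only [Finset.mem_filter, Finset.mem_powersetCard, Finset.bipartiteAbove, Finset.mem_biUnion]
  constructor
  · rintro ⟨⟨h1, h2⟩, h3⟩
    exact ⟨⟨w, hw, h1, h2⟩, h1, h3⟩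
  · rintro ⟨⟨_, _, _, h2⟩, h1, h3⟩
    exact ⟨⟨h1, h2⟩, h3⟩

/-- The double count behind the theorem: `A w` is the set of facets through the vertex `w`,
`U w` those whose opposite edge at `w` is ascending, and `C T` says that the polygonal face `T`
passes through the cusp. -/
lemma false_of_polygon_count (V : Finset α) (A U : α → Finset ι) (C : Finset ι → Prop)
    (hA : ∀ w ∈ V, (A w).card = 5) (hU : ∀ w ∈ V, U w ⊆ A w)
    (hmin : ∀ T, ∀ w ∈ V, ∀ w' ∈ V, T ⊆ A w → T ⊆ A w' → A w \ T ⊆ U w → A w' \ T ⊆ U w' →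
      w = w')
    (hmax : ∀ T, ∀ w ∈ V, ∀ w' ∈ V, T ⊆ A w → T ⊆ A w' → A w \ T ⊆ A w \ U w →
      A w' \ T ⊆ A w' \ U w' → w = w')
    (hcusp : ∀ T, C T → ∀ w ∈ V, T ⊆ A w → ¬ A w \ T ⊆ A w \ U w)
    (hbot : ∃ w ∈ V, U w = A w)
    (hthree : ∀ T, T.card = 3 → ∀ w ∈ V, T ⊆ A w → 3 ≤ (V.filter fun w => T ⊆ A w).card)
    (hfive : ∀ T, T.card = 3 → ¬ C T → ∀ w ∈ V, T ⊆ A w →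
      5 ≤ (V.filter fun w => T ⊆ A w).card) : False := by
  classical
  set F := V.biUnion fun w => (A w).powersetCard 3 with hF
  have hFT : ∀ T ∈ F, T.card = 3 ∧ ∃ w ∈ V, T ⊆ A w := by
    intro T hT
    obtain ⟨w, hw, hTw⟩ := Finset.mem_biUnion.1 hT
    rw [Finset.mem_powersetCard] at hTw
    exact ⟨hTw.2, w, hw, hTw.1⟩
  have hvert : V.card * 10 = ∑ T ∈ F, (V.filter fun w => T ⊆ A w).card := by
    have := sum_card_filter_comm V A fun _ _ => True
    simp only [and_true, Finset.filter_true] at this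
    rw [← this, ← smul_eq_mul, ← Finset.sum_const]
    refine Finset.sum_congr rfl fun w hw => ?_
    rw [Finset.card_powersetCard, hA w hw]
    rfl
  have hlow : ∑ T ∈ F, (if C T then 3 else 5) ≤ V.card * 10 := by
    rw [hvert]
    refine Finset.sum_le_sum fun T hT => ?_
    obtain ⟨hT3, w, hw, hTw⟩ := hFT T hT
    split_ifs with hC
    · exact hthree T hT3 w hw hTw
    · exact hfive T hT3 hC w hw hTw
  have hup : ∑ w ∈ V, ((((A w).powersetCard 3).filter fun T => A w \ T ⊆ U w).card +
      (((A w).powersetCard 3).filter fun T => A w \ T ⊆ A w \ U w).card) ≤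
      ∑ T ∈ F, (if C T then 1 else 2) := by
    rw [Finset.sum_add_distrib, sum_card_filter_comm V A fun w T => A w \ T ⊆ U w,
      sum_card_filter_comm V A fun w T => A w \ T ⊆ A w \ U w, ← Finset.sum_add_distrib]
    refine Finset.sum_le_sum fun T _ => ?_
    have h1 : (V.filter fun w => T ⊆ A w ∧ A w \ T ⊆ U w).card ≤ 1 := by
      refine Finset.card_le_one.2 fun w hw w' hw' => ?_
      rw [Finset.mem_filter] at hw hw'
      exact hmin T w hw.1 w' hw'.1 hw.2.1 hw'.2.1 hw.2.2 hw'.2.2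
    split_ifs with hC
    · have h2 : (V.filter fun w => T ⊆ A w ∧ A w \ T ⊆ A w \ U w) = ∅ :=
        Finset.filter_eq_empty_iff.2 fun w hw hTw => hcusp T hC w hw hTw.1 hTw.2
      rw [h2, Finset.card_empty]
      exact h1
    · have h2 : (V.filter fun w => T ⊆ A w ∧ A w \ T ⊆ A w \ U w).card ≤ 1 := by
        refine Finset.card_le_one.2 fun w hw w' hw' => ?_
        rw [Finset.mem_filter] at hw hw'
        exact hmax T w hw.1 w' hw'.1 hw.2.1 hw'.2.1 hw.2.2 hw'.2.2
      omega
  have hpt : ∀ w ∈ V, 4 ≤ (((A w).powersetCard 3).filter fun T => A w \ T ⊆ U w).card +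
      (((A w).powersetCard 3).filter fun T => A w \ T ⊆ A w \ U w).card := by
    intro w hw
    have h1 := choose_two_le_card_filter (hA w hw) (hU w hw)
    have h2 := choose_two_le_card_filter (hA w hw) (Finset.sdiff_subset (s := A w) (t := U w))
    rw [Finset.card_sdiff_of_subset (hU w hw), hA w hw] at h2
    have h3 := choose_two_add_choose_two (U w).card (hA w hw ▸ Finset.card_le_card (hU w hw))
    omega
  obtain ⟨b, hb, hUb⟩ := hbot
  have hptb : 10 ≤ (((A b).powersetCard 3).filter fun T => A b \ T ⊆ U b).card +
      (((A b).powersetCard 3).filter fun T => A b \ T ⊆ A b \ U b).card := by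
    have h1 := choose_two_le_card_filter (hA b hb) (hU b hb)
    rw [hUb, hA b hb] at h1
    rw [hUb]
    exact le_add_right h1
  have htot : (V.card - 1) * 4 + 10 ≤ ∑ T ∈ F, (if C T then 1 else 2) := by
    refine le_trans ?_ hup
    rw [← Finset.sum_erase_add V _ hb, ← Finset.card_erase_of_mem hb, ← smul_eq_mul,
      ← Finset.sum_const]
    exact add_le_add (Finset.sum_le_sum fun w hw => hpt w (Finset.mem_of_mem_erase hw)) hptb
  have hcomp : ∑ T ∈ F, (if C T then 1 else 2) * 5 ≤ ∑ T ∈ F, (if C T then 3 else 5) * 2 :=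
    Finset.sum_le_sum fun T _ => by split_ifs <;> norm_num
  rw [← Finset.sum_mul, ← Finset.sum_mul] at hcomp
  have hVpos : 0 < V.card := Finset.card_pos.2 ⟨b, hb⟩
  omega

end Counting

namespace OneCuspCone

variable {ι : Type*} {e : ι → Fin (5 + 1) → ℝ} {I : Finset ι}
  {V : Finset (Fin (5 + 1) → ℝ)} {v : Fin (5 + 1) → ℝ}

/-- The derivative at `w`, up to a positive factor, of `x ↦ a x / -⟨x, v⟩`. -/
def tilt (a : (Fin (5 + 1) → ℝ) →ₗ[ℝ] ℝ) (v w : Fin (5 + 1) → ℝ) :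
    (Fin (5 + 1) → ℝ) →ₗ[ℝ] ℝ :=
  -(mink w v) • a + a w • minkForm 5 v

lemma tilt_apply (a : (Fin (5 + 1) → ℝ) →ₗ[ℝ] ℝ) (v w x : Fin (5 + 1) → ℝ) :
    tilt a v w x = -(mink w v) * a x + a w * mink v x := rfl

lemma tilt_self (a : (Fin (5 + 1) → ℝ) →ₗ[ℝ] ℝ) (v w : Fin (5 + 1) → ℝ) : tilt a v w w = 0 := by
  rw [tilt_apply, mink_comm v w]; ring

lemma tilt_neg (a : (Fin (5 + 1) → ℝ) →ₗ[ℝ] ℝ) (v w x : Fin (5 + 1) → ℝ) :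
    tilt (-a) v w x = -tilt a v w x := by
  simp only [tilt_apply, LinearMap.neg_apply]; ring

lemma tilt_expansion (h : OneCuspCone e I V v) (a : (Fin (5 + 1) → ℝ) →ₗ[ℝ] ℝ)
    {w : Fin (5 + 1) → ℝ} (hw : w ∈ V) (x : Fin (5 + 1) → ℝ) :
    tilt a v w x = ∑ k ∈ activeSet e I w, mink x (e k) * tilt a v w (e k) := by
  obtain ⟨c, hc⟩ := h.expansion hw x
  conv_lhs => rw [hc]
  simp [tilt_self]

/-- A linear-fractional function has at most one local minimum on a face. -/
lemma eq_of_tilt_neg [DecidableEq ι] (h : OneCuspCone e I V v) (a : (Fin (5 + 1) → ℝ) →ₗ[ℝ] ℝ)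
    {T : Finset ι} {w w' : Fin (5 + 1) → ℝ} (hw : w ∈ V) (hw' : w' ∈ V)
    (hT : T ⊆ activeSet e I w) (hT' : T ⊆ activeSet e I w')
    (hneg : ∀ k ∈ activeSet e I w \ T, tilt a v w (e k) < 0)
    (hneg' : ∀ k ∈ activeSet e I w' \ T, tilt a v w' (e k) < 0) : w = w' := by
  have key : ∀ {w w'}, w ∈ V → w' ∈ V → T ⊆ activeSet e I w' →
      (∀ k ∈ activeSet e I w \ T, tilt a v w (e k) < 0) →
      ∀ k ∈ activeSet e I w, 0 ≤ mink w' (e k) * tilt a v w (e k) := by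
    intro w w' hw hw' hT' hneg k hk
    by_cases hkT : k ∈ T
    · rw [mink_comm, (mem_activeSet.1 (hT' hkT)).2, zero_mul]
    · refine mul_nonneg_of_nonpos_of_nonpos ?_ (hneg k (Finset.mem_sdiff.2 ⟨hk, hkT⟩)).le
      rw [mink_comm]
      exact h.le w' hw' k (mem_activeSet.1 hk).1
  have h1 := h.tilt_expansion a hw w'
  have h2 := h.tilt_expansion a hw' w
  have hnn := key hw hw' hT' hneg
  have hanti : tilt a v w w' = -tilt a v w' w := by
    simp only [tilt_apply, mink_comm v]; ring
  have hsum : ∑ k ∈ activeSet e I w, mink w' (e k) * tilt a v w (e k) = 0 := by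
    have h3 := Finset.sum_nonneg hnn
    have h4 := Finset.sum_nonneg (key hw' hw hT hneg')
    linarith
  obtain ⟨c, hc⟩ := h.expansion hw w'
  rw [Finset.sum_eq_zero, zero_add] at hc
  · have h0 := congrFun hc 0
    rw [Pi.smul_apply, h.time w hw, h.time w' hw', smul_eq_mul, mul_one] at h0
    rw [hc, ← h0, one_smul]
  · intro k hk
    by_cases hkT : k ∈ T
    · rw [mink_comm, (mem_activeSet.1 (hT' hkT)).2, zero_smul]
    · rw [(mul_eq_zero.1 ((Finset.sum_eq_zero_iff_of_nonneg hnn).1 hsum k hk)).resolve_right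
        (hneg k (Finset.mem_sdiff.2 ⟨hk, hkT⟩)).ne, zero_smul]

lemma exists_tilt_neg_of_cusp [DecidableEq ι] (h : OneCuspCone e I V v)
    {a : (Fin (5 + 1) → ℝ) →ₗ[ℝ] ℝ} (ha : 0 < a v) {T : Finset ι}
    (hTv : ∀ k ∈ T, mink (e k) v = 0) {w : Fin (5 + 1) → ℝ} (hw : w ∈ V) :
    ∃ k ∈ activeSet e I w \ T, tilt a v w (e k) < 0 := by
  by_contra! hcon
  have h1 := h.tilt_expansion a hw v
  rw [tilt_apply, h.null, mul_zero, add_zero] at h1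
  have h2 : 0 < -(mink w v) * a v := mul_pos (neg_pos.2 (h.neg w hw)) ha
  have h3 : ∑ k ∈ activeSet e I w, mink v (e k) * tilt a v w (e k) ≤ 0 := by
    refine Finset.sum_nonpos fun k hk => ?_
    rw [mink_comm]
    by_cases hkT : k ∈ T
    · rw [hTv k hkT, zero_mul]
    · exact mul_nonpos_of_nonpos_of_nonneg (h.le_cusp k (mem_activeSet.1 hk).1)
        (hcon k (Finset.mem_sdiff.2 ⟨hk, hkT⟩))
  linarith

lemma exists_forall_tilt_nonpos [DecidableEq ι] (h : OneCuspCone e I V v) (hV : V.Nonempty)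
    {a : (Fin (5 + 1) → ℝ) →ₗ[ℝ] ℝ} (ha : 0 < a v) :
    ∃ w ∈ V, ∀ k ∈ activeSet e I w, tilt a v w (e k) ≤ 0 := by
  obtain ⟨w, hw, hmin⟩ := V.exists_min_image (fun w => a w / -mink w v) hV
  refine ⟨w, hw, fun k hk => ?_⟩
  have hV' : ∀ u ∈ V, 0 ≤ tilt a v w u := by
    intro u hu
    have h1 := hmin u hu
    rw [div_le_div_iff₀ (neg_pos.2 (h.neg w hw)) (neg_pos.2 (h.neg u hu))] at h1
    rw [tilt_apply, mink_comm v u]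
    linarith
  have hv : 0 ≤ tilt a v w v := by
    rw [tilt_apply, h.null, mul_zero, add_zero]
    exact (mul_pos (neg_pos.2 (h.neg w hw)) ha).le
  obtain ⟨ε, hε, hx, hxI⟩ := h.exists_pos_edge hw hk
  obtain ⟨c, d, hc, hd, hxe⟩ := h.gen _ hx hxI
  have h1 := congrArg (tilt a v w) hxe
  simp only [map_add, map_smul, map_neg, map_sum, tilt_self, smul_eq_mul, zero_add] at h1
  have h2 : 0 ≤ ∑ u ∈ V, c u * tilt a v w u :=
    Finset.sum_nonneg fun u hu => mul_nonneg (hc u hu) (hV' u hu)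
  have h3 := mul_nonneg hd hv
  nlinarith

lemma exists_generic (h : OneCuspCone e I V v) (hV : V.Nonempty) :
    ∃ a : (Fin (5 + 1) → ℝ) →ₗ[ℝ] ℝ, 0 < a v ∧
      ∀ w ∈ V, ∀ k ∈ activeSet e I w, tilt a v w (e k) ≠ 0 := by
  have hv0 : v ≠ 0 := by
    rintro rfl
    obtain ⟨w, hw⟩ := hV
    exact (h.neg w hw).ne (mink_zero_right w)
  obtain ⟨a, ha⟩ := Module.exists_dual_forall_apply_ne_zero (K := ℝ)
    (fun p : Option (V × I) => p.elim v fun p =>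
      -(mink p.1.1 v) • e p.2 + mink v (e p.2) • p.1.1) (by
    rintro (_ | ⟨⟨w, hw⟩, ⟨k, hk⟩⟩)
    · exact hv0
    · intro h0
      have h1 : mink w v • e k = mink v (e k) • w := by
        rw [Option.elim_some, neg_smul, neg_add_eq_zero] at h0
        exact h0
      have h2 := congrArg (fun x => mink x x) h1
      simp only [mink_smul_left, mink_smul_right, h.unit, mul_one] at h2
      have h3 := mul_self_pos.2 (h.neg w hw).ne
      nlinarith [(h.fut w hw).1, mul_self_nonneg (mink v (e k))])
  have hgen : ∀ w ∈ V, ∀ k ∈ activeSet e I w, tilt a v w (e k) ≠ 0 := by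
    intro w hw k hk
    have := ha (some (⟨w, hw⟩, ⟨k, (mem_activeSet.1 hk).1⟩))
    rw [Option.elim_some, map_add, map_smul, map_smul, smul_eq_mul, smul_eq_mul,
      mul_comm (mink v _)] at this
    exact this
  rcases lt_or_gt_of_ne (ha none) with hneg | hpos
  · exact ⟨-a, neg_pos.2 hneg, fun w hw k hk => by
      rw [tilt_neg]; exact neg_ne_zero.2 (hgen w hw k hk)⟩
  · exact ⟨a, hpos, hgen⟩

/-- A right-angled five-dimensional polyhedron cannot have exactly one cusp. -/
theorem false_of_nonempty (h : OneCuspCone e I V v) (hV : V.Nonempty) : False := by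
  classical
  obtain ⟨a, ha, hgen⟩ := h.exists_generic hV
  have hpos : ∀ {w T}, w ∈ V → activeSet e I w \ T ⊆ activeSet e I w \
      (activeSet e I w).filter (fun k => tilt a v w (e k) < 0) →
      ∀ k ∈ activeSet e I w \ T, tilt (-a) v w (e k) < 0 := by
    intro w T hw hsub k hk
    have h1 := hsub hk
    rw [Finset.mem_sdiff, Finset.mem_filter] at h1
    rw [tilt_neg, neg_neg_iff_pos]
    exact lt_of_le_of_ne (not_lt.1 fun h0 => h1.2 ⟨h1.1, h0⟩) (hgen w hw k h1.1).symm
  refine false_of_polygon_count V (activeSet e I)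
    (fun w => (activeSet e I w).filter fun k => tilt a v w (e k) < 0)
    (fun T => ∀ k ∈ T, mink (e k) v = 0) h.card (fun w _ => Finset.filter_subset _ _)
    ?_ ?_ ?_ ?_ (fun T hT w hw hTw => h.three_le_card hT hw hTw)
    (fun T hT hC w hw hTw => h.five_le_card hT hw hTw hC)
  · exact fun T w hw w' hw' hT hT' hs hs' => h.eq_of_tilt_neg a hw hw' hT hT'
      (fun k hk => (Finset.mem_filter.1 (hs hk)).2) fun k hk => (Finset.mem_filter.1 (hs' hk)).2
  · exact fun T w hw w' hw' hT hT' hs hs' => h.eq_of_tilt_neg (-a) hw hw' hT hT'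
      (hpos hw hs) (hpos hw' hs')
  · intro T hTv w hw _ hs
    obtain ⟨k, hk, hneg⟩ := h.exists_tilt_neg_of_cusp ha hTv hw
    have := hpos hw hs k hk
    rw [tilt_neg] at this
    linarith
  · obtain ⟨w, hw, hle⟩ := h.exists_forall_tilt_nonpos hV ha
    exact ⟨w, hw, Finset.filter_true_of_mem fun k hk =>
      lt_of_le_of_ne (hle k hk) (hgen w hw k hk)⟩

end OneCuspCone

/-! ### The cone over a polyhedron with one ideal vertex -/

lemma kleinLift_sum {n : ℕ} {s : Finset (EuclideanSpace ℝ (Fin n))}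
    {c : EuclideanSpace ℝ (Fin n) → ℝ} (hc : ∑ p ∈ s, c p = 1) :
    kleinLift (∑ p ∈ s, c p • p) = ∑ p ∈ s, c p • kleinLift p := by
  funext i
  induction i using Fin.cases <;> simp [kleinLift, hc]

namespace HypPolyhedron

variable {n : ℕ} {P : HypPolyhedron n}

lemma verts_subset_cl : P.verts ⊆ P.cl := fun _ hw => IsExposed.subset hw rfl

lemma eq_zero_of_mem_verts {w u : EuclideanSpace ℝ (Fin n)} (hw : w ∈ P.verts) {ε δ : ℝ}
    (hε : 0 < ε) (hδ : 0 < δ) (h1 : w + ε • u ∈ P.cl) (h2 : w + δ • (-u) ∈ P.cl) : u = 0 := by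
  obtain ⟨l, hl⟩ := hw (Set.singleton_nonempty w)
  have hwl : w ∈ {x ∈ P.cl | ∀ y ∈ P.cl, l y ≤ l x} := hl ▸ rfl
  have h3 := hwl.2 _ h1
  have h4 := hwl.2 _ h2
  simp only [map_add, map_smul, map_neg, smul_eq_mul] at h3 h4
  have hlu : l u = 0 := by nlinarith
  have h5 : w + ε • u ∈ ({w} : Set (EuclideanSpace ℝ (Fin n))) := by
    rw [hl]
    refine ⟨h1, fun y hy => ?_⟩
    rw [map_add, map_smul, hlu, smul_zero, add_zero]
    exact hwl.2 y hy
  exact (smul_eq_zero.1 (add_eq_left.1 h5)).resolve_left hε.ne'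

lemma FacetSystem.le_card_activeSet {I : Finset (Fin P.m)} (hI : FacetSystem P I)
    {w : EuclideanSpace ℝ (Fin n)} (hw : w ∈ P.verts) (hw1 : ‖w‖ < 1) :
    n ≤ (activeSet P.e I (kleinLift w)).card := by
  classical
  by_contra! hlt
  set A := activeSet P.e I (kleinLift w) with hA
  let L : EuclideanSpace ℝ (Fin n) →ₗ[ℝ] (A → ℝ) :=
    LinearMap.pi fun i => (innerSL ℝ (spatialPart (P.e i))).toLinearMap
  have hker := LinearMap.ker_ne_bot_of_finrank_lt (f := L) (by simpa using hlt)
  obtain ⟨u, hu, hu0⟩ := (Submodule.ne_bot_iff _).1 hker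
  have huA : ∀ i ∈ A, mink (P.e i) (spatial u) = 0 := fun i hi => by
    rw [mink_spatial]
    exact congrFun (LinearMap.mem_ker.1 hu) ⟨i, hi⟩
  have hwle := (P.norm_le_and_mink_nonpos_of_mem_cl (verts_subset_cl hw)).2
  have key : ∀ u : EuclideanSpace ℝ (Fin n), (∀ i ∈ A, mink (P.e i) (spatial u) = 0) →
      ∃ ε : ℝ, 0 < ε ∧ w + ε • u ∈ P.cl := by
    intro u huA
    obtain ⟨ε, hε, h1, h2⟩ := exists_pos_small (e := P.e) (kleinLift_mem_futureCone hw1)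
      (spatial u) (I \ A) fun k hk => by
        rw [Finset.mem_sdiff, hA, mem_activeSet] at hk
        exact lt_of_le_of_ne (hwle k) fun h0 => hk.2 ⟨hk.1, h0⟩
    refine ⟨ε, hε, ?_⟩
    rw [← kleinLift_add] at h1
    refine P.mem_cl_of_mem h1 (hI.le_zero _ h1 fun k hk => ?_)
    rw [kleinLift_add]
    by_cases hkA : k ∈ A
    · rw [mink_add_right, mink_smul_right, huA k hkA, (mem_activeSet.1 hkA).2]
      simp
    · exact (h2 k (Finset.mem_sdiff.2 ⟨hk, hkA⟩)).le
  obtain ⟨ε, hε, h1⟩ := key u huA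
  obtain ⟨δ, hδ, h2⟩ := key (-u) fun i hi => by
    rw [mink_spatial, inner_neg_right, ← mink_spatial, huA i hi, neg_zero]
  exact hu0 (eq_zero_of_mem_verts hw hε hδ h1 h2)

lemma FacetSystem.orthogonal_of_mem_activeSet {I : Finset (Fin P.m)} (hI : FacetSystem P I)
    {w : Fin (n + 1) → ℝ} (hw : w ∈ futureCone n) :
    ∀ i ∈ activeSet P.e I w, ∀ j ∈ activeSet P.e I w, i ≠ j → mink (P.e i) (P.e j) = 0 := by
  intro i hi j hj hij
  rw [mem_activeSet] at hi hj
  exact hI.orthogonal w hw i hi.1 j hj.1 hij hi.2 hj.2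

lemma FacetSystem.ne_smul {I : Finset (Fin P.m)} (hI : FacetSystem P I) {i j : Fin P.m}
    (hi : i ∈ I) (hj : j ∈ I) (hij : i ≠ j) (c : ℝ) : P.e i ≠ c • P.e j := by
  intro h
  obtain ⟨p, -, hp⟩ := P.exists_interior_point
  have h1 := hI.nonpos i hi j hj hij
  have h2 := hp i
  rw [h, mink_smul_left, P.unit, mul_one] at h1
  rw [h, mink_smul_left] at h2
  exact absurd (mul_nonneg_of_nonpos_of_nonpos h1 (hp j).le) (not_le.2 h2)

/-- Every point of the cone over a finite-volume polyhedron is a nonnegative combination of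
vertices. -/
lemma FiniteVolume.exists_combination (hfv : P.FiniteVolume) {I : Finset (Fin P.m)}
    (hI : FacetSystem P I) {x : Fin (n + 1) → ℝ} (hx : x ∈ futureCone n)
    (hxI : ∀ i ∈ I, mink (P.e i) x ≤ 0) :
    ∃ c : EuclideanSpace ℝ (Fin n) → ℝ, (∀ p ∈ hfv.1.toFinset, 0 ≤ c p) ∧
      x = ∑ p ∈ hfv.1.toFinset, c p • kleinLift p := by
  have hlift := kleinLift_kleinMap hx.2.ne'
  have hfut : kleinLift (kleinMap x) ∈ futureCone n := by
    rw [hlift]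
    exact smul_mem_futureCone (inv_pos.2 hx.2) hx
  have hcl : kleinMap x ∈ P.cl := P.mem_cl_of_mem hfut fun i => by
    rw [hlift, mink_smul_right]
    exact mul_nonpos_of_nonneg_of_nonpos (inv_pos.2 hx.2).le (hI.le_zero x hx hxI i)
  rw [hfv.2, ← hfv.1.coe_toFinset, Finset.mem_convexHull'] at hcl
  obtain ⟨c, hc, hc1, hcx⟩ := hcl
  refine ⟨fun p => x 0 * c p, fun p hp => mul_nonneg hx.2.le (hc p hp), ?_⟩
  simp only [mul_smul]
  rw [← Finset.smul_sum, ← kleinLift_sum hc1, hcx, smul_kleinLift_kleinMap hx.2.ne']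

lemma FacetSystem.oneCuspCone {P : HypPolyhedron 5} {I : Finset (Fin P.m)}
    (hI : FacetSystem P I) (hfv : P.FiniteVolume) {v : EuclideanSpace ℝ (Fin 5)}
    (hv : v ∈ P.verts) (hv1 : ‖v‖ = 1) (hne : ∀ w ∈ P.verts, w ≠ v → ‖w‖ < 1)
    [DecidableEq (EuclideanSpace ℝ (Fin 5))] [DecidableEq (Fin (5 + 1) → ℝ)] :
    OneCuspCone P.e I ((hfv.1.toFinset.erase v).image kleinLift) (kleinLift v) := by
  have hV : ∀ w ∈ (hfv.1.toFinset.erase v).image kleinLift,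
      ∃ p ∈ P.verts, ‖p‖ < 1 ∧ kleinLift p = w := by
    intro w hw
    obtain ⟨p, hp, rfl⟩ := Finset.mem_image.1 hw
    rw [Finset.mem_erase, Set.Finite.mem_toFinset] at hp
    exact ⟨p, hp.2, hne p hp.2 hp.1, rfl⟩
  have hnull : mink (kleinLift v) (kleinLift v) = 0 := by
    rw [mink_kleinLift_self, hv1]; norm_num
  have hfut : ∀ w ∈ (hfv.1.toFinset.erase v).image kleinLift, w ∈ futureCone 5 := by
    intro w hw
    obtain ⟨p, -, hp1, rfl⟩ := hV w hw
    exact kleinLift_mem_futureCone hp1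
  have horth := fun w hw => hI.orthogonal_of_mem_activeSet (hfut w hw)
  refine ⟨P.unit, fun i hi j hj hij c => hI.ne_smul hi hj hij c, hfut, ?_, hnull, ?_, ?_, ?_, ?_,
    horth, ?_⟩
  · intro w hw
    obtain ⟨p, -, -, rfl⟩ := hV w hw
    exact kleinLift_zero p
  · exact fun w hw => mink_neg_of_mem_futureCone (hfut w hw) hnull.le
      (by rw [kleinLift_zero]; exact one_pos)
  · intro w hw i _
    obtain ⟨p, hp, -, rfl⟩ := hV w hw
    exact (P.norm_le_and_mink_nonpos_of_mem_cl (verts_subset_cl hp)).2 i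
  · exact fun i _ => (P.norm_le_and_mink_nonpos_of_mem_cl (verts_subset_cl hv)).2 i
  · intro w hw
    refine le_antisymm (card_le_of_orthonormal (hfut w hw) (fun i _ => P.unit i) (horth w hw)
      fun i hi => (mem_activeSet.1 hi).2) ?_
    obtain ⟨p, hp, hp1, rfl⟩ := hV w hw
    exact hI.le_card_activeSet hp hp1
  · intro x hx hxI
    obtain ⟨c, hc, hcx⟩ := hfv.exists_combination hI hx hxI
    have hvmem : v ∈ hfv.1.toFinset := hfv.1.mem_toFinset.2 hv
    refine ⟨fun w => c (kleinMap w), c v, ?_, hc v hvmem, ?_⟩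
    · intro w hw
      obtain ⟨p, hp, -, rfl⟩ := hV w hw
      simp only [kleinMap_kleinLift]
      exact hc p (hfv.1.mem_toFinset.2 hp)
    · rw [hcx, Finset.sum_image (kleinLift_injective.injOn), ← Finset.sum_erase_add _ _ hvmem]
      simp only [kleinMap_kleinLift]

end HypPolyhedron

lemma OneCuspCone.nonempty {ι : Type*} {e : ι → Fin (5 + 1) → ℝ} {I : Finset ι}
    {V : Finset (Fin (5 + 1) → ℝ)} {v : Fin (5 + 1) → ℝ} (h : OneCuspCone e I V v)
    {x : Fin (5 + 1) → ℝ} (hx : x ∈ futureCone 5) (hxI : ∀ i ∈ I, mink (e i) x ≤ 0) :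
    V.Nonempty := by
  by_contra hV
  obtain ⟨c, d, -, -, hxe⟩ := h.gen x hx hxI
  rw [Finset.not_nonempty_iff_eq_empty.1 hV, Finset.sum_empty, zero_add] at hxe
  have := hx.1
  rw [hxe, mink_smul_left, mink_smul_right, h.null] at this
  simp at this

/-- Every finite-volume non-compact right-angled convex hyperbolic `5`-polyhedron has at
least two ideal vertices. -/
theorem cusps_of_5_polyhedron (P : HypPolyhedron 5) (hfv : P.FiniteVolume)
    (hra : P.IsRightAngled) (hnc : ¬ P.IsCompactPoly) :
    2 ≤ P.vInf := by
  classical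
  have hnorm : ∀ w ∈ P.verts, ‖w‖ ≤ 1 := fun w hw =>
    (P.norm_le_and_mink_nonpos_of_mem_cl (HypPolyhedron.verts_subset_cl hw)).1
  obtain ⟨v, hv, hv1⟩ : ∃ v ∈ P.verts, ‖v‖ = 1 := by
    by_contra! hcon
    exact hnc ⟨hfv, fun w hw => lt_of_le_of_ne (hnorm w hw) (hcon w hw)⟩
  by_contra! hlt
  have hfin : P.idealVerts.Finite := hfv.1.subset fun _ hw => hw.1
  have huniq : ∀ w ∈ P.verts, w ≠ v → ‖w‖ < 1 := fun w hw hwv =>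
    lt_of_le_of_ne (hnorm w hw) fun hw1 =>
      hwv ((Set.ncard_le_one hfin).1 (Nat.le_of_lt_succ hlt) w ⟨hw, hw1⟩ v ⟨hv, hv1⟩)
  obtain ⟨I, hI⟩ := HypPolyhedron.exists_facetSystem hra
  have hcone := hI.oneCuspCone hfv hv hv1 huniq
  obtain ⟨p, hp, hpe⟩ := P.exists_interior_point
  exact hcone.false_of_nonempty (hcone.nonempty hp fun i _ => (hpe i).le)
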